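/- arXiv:1806.04566 — 3 statements merged into one kernel-verified Lean document; each statement's English description precedes it below -/
import Mathlib

section
/- Let k ≥ 2 and j ∈ {1,…,k−1}. With high probability, there exists a pair (K,C) that forms a copy of M_j^- in G_p for every p in the range [p_j^−, p_{M_j}) simultaneously, where p_j^− := (1 − 1/√(log n))·(j+1)·(log n)·(k−j)!/((k−j+1)·n^{k−j}). -/
open MeasureTheory Filter

attribute [local instance] Classical.propDecidable

namespace RSC

variable {V : Type*}

/-- `A` is an `i`-dimensional simplex of the complex `G`. -/
def IsSimplex (G : Set (Finset V)) (i : ℕ) (A : Finset V) : Prop :=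
  A ∈ G ∧ A.card = i + 1

/-- A `k`-dimensional simplicial complex on vertex set `V`. -/
structure IsKComplex (G : Set (Finset V)) (k : ℕ) : Prop where
  down : ∀ A ∈ G, ∀ B, B ⊆ A → B.Nonempty → B ∈ G
  singletons : ∀ v : V, ({v} : Finset V) ∈ G
  dim : ∀ A ∈ G, A.card ≤ k + 1

/-- `i`-cochains with `F₂`-coefficients. -/
abbrev Cochain (G : Set (Finset V)) (i : ℕ) : Type _ :=
  {A : Finset V // IsSimplex G i A} → ZMod 2

/-- The coboundary map `δ^i : C^i(G) → C^{i+1}(G)`. -/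
noncomputable def coboundary (G : Set (Finset V)) (i : ℕ) :
    Cochain G i →ₗ[ZMod 2] Cochain G (i + 1) where
  toFun f := fun σ => ∑ τ ∈ Finset.powersetCard (i + 1) (σ : Finset V),
      if h : IsSimplex G i τ then f ⟨τ, h⟩ else 0
  map_add' f g := by
    funext σ
    simp only [Pi.add_apply, ← Finset.sum_add_distrib]
    refine Finset.sum_congr rfl fun τ _ => ?_
    by_cases h : IsSimplex G i τ <;> simp [h]
  map_smul' c f := by
    funext σ
    simp only [Pi.smul_apply, RingHom.id_apply, Finset.smul_sum]
    refine Finset.sum_congr rfl fun τ _ => ?_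
    by_cases h : IsSimplex G i τ <;> simp [h]

/-- The submodule of `i`-cocycles. -/
noncomputable def cocycles (G : Set (Finset V)) (i : ℕ) : Submodule (ZMod 2) (Cochain G i) :=
  LinearMap.ker (coboundary G i)

/-- The submodule of `i`-coboundaries (`δ^{-1}` is the zero map). -/
noncomputable def coboundaries (G : Set (Finset V)) : (i : ℕ) → Submodule (ZMod 2) (Cochain G i)
  | 0 => ⊥
  | (i + 1) => LinearMap.range (coboundary G i)

/-- The `i`-th cohomology group `H^i(G;F₂) = ker δ^i / im δ^{i-1}`. -/
noncomputable abbrev cohomology (G : Set (Finset V)) (i : ℕ) :=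
  (cocycles G i) ⧸ ((coboundaries G i).comap (cocycles G i).subtype)

/-- `F₂`-cohomological `j`-connectedness: `H^0 ≅ F₂` and `H^i = 0` for `1 ≤ i ≤ j`. -/
def CohomConnected (G : Set (Finset V)) (j : ℕ) : Prop :=
  Nonempty (cohomology G 0 ≃ₗ[ZMod 2] ZMod 2) ∧
    ∀ i, 1 ≤ i → i ≤ j → Subsingleton (cohomology G i)

/-- The `j`-flower in `K` with centre `C`: the set of petals `C ∪ {w}`, `w ∈ K \ C`. -/
def Flower [DecidableEq V] (K C : Finset V) : Set (Finset V) :=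
  {P | ∃ w ∈ K \ C, P = insert w C}

/-- A copy of `M_j^-`: a `k`-simplex `K` together with a `(j-1)`-simplex `C ⊆ K` such that
each petal of the flower `F(K,C)` is contained in no `k`-simplex other than `K`. -/
def IsMjMinus [DecidableEq V] (G : Set (Finset V)) (k j : ℕ) (K C : Finset V) : Prop :=
  IsSimplex G k K ∧ C ∈ G ∧ C.card = j ∧ C ⊆ K ∧
    ∀ P ∈ Flower K C, ∀ K', IsSimplex G k K' → P ⊆ K' → K' = K

/-- A `j`-cycle: every `(j-1)`-simplex lies in an even number of members of `J`. -/
def IsCycle (G : Set (Finset V)) (j : ℕ) (J : Finset (Finset V)) : Prop :=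
  (∀ σ ∈ J, IsSimplex G j σ) ∧
    ∀ τ : Finset V, τ.card = j → Even (J.filter (fun σ => τ ⊆ σ)).card

/-- A copy of `M_j`. -/
def IsMj [DecidableEq V] (G : Set (Finset V)) (k j : ℕ) (K C : Finset V)
    (J : Finset (Finset V)) : Prop :=
  IsMjMinus G k j K C ∧ IsCycle G j J ∧ ∃! P : Finset V, P ∈ J ∧ P ∈ Flower K C

/-- A `j`-shell: a `(j+2)`-set all of whose `(j+1)`-subsets are `j`-simplices. -/
def IsShell (G : Set (Finset V)) (j : ℕ) (A : Finset V) : Prop :=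
  A.card = j + 2 ∧ ∀ τ ⊆ A, τ.card = j + 1 → τ ∈ G

/-- A copy of `M_j^*`. -/
def IsMjStar [DecidableEq V] (G : Set (Finset V)) (k j : ℕ) (K C : Finset V) (w a : V) : Prop :=
  IsMjMinus G k j K C ∧ w ∈ K \ C ∧ a ∉ K ∧ IsShell G j (insert a (insert w C))

/-- The support of a cochain. -/
def cochainSupport {G : Set (Finset V)} {i : ℕ} (f : Cochain G i) : Set (Finset V) :=
  {A | ∃ h : IsSimplex G i A, f ⟨A, h⟩ = 1}

/-- A cochain arising from a copy of `M_j^-`: its support is the flower `F(K,C)`. -/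
def ArisesFrom [DecidableEq V] (G : Set (Finset V)) (k j : ℕ) (f : Cochain G j)
    (K C : Finset V) : Prop :=
  IsMjMinus G k j K C ∧ cochainSupport f = Flower K C

/-- A `j`-cocycle generated by copies of `M_j^-`: it differs by a `j`-coboundary from a sum
of `j`-cocycles arising from copies of `M_j^-`. -/
def GeneratedByMjMinus [DecidableEq V] (G : Set (Finset V)) (k j : ℕ) (f : Cochain G j) : Prop :=
  ∃ (m : ℕ) (fs : Fin m → Cochain G j),
    (∀ i, ∃ K C, ArisesFrom G k j (fs i) K C) ∧
      f - (∑ i, fs i) ∈ coboundaries G j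

/-- Membership in `N_G`: a `j`-cocycle not generated by copies of `M_j^-`. -/
def InNG [DecidableEq V] (G : Set (Finset V)) (k j : ℕ) (f : Cochain G j) : Prop :=
  f ∈ cocycles G j ∧ ¬ GeneratedByMjMinus G k j f

/-- Traversability: the transitive closure of "lying in a common `k`-simplex" is `S × S`. -/
def Traversable (G : Set (Finset V)) (k : ℕ) (S : Set (Finset V)) : Prop :=
  ∀ σ₁ ∈ S, ∀ σ₂ ∈ S,
    Relation.TransGen
      (fun a b => a ∈ S ∧ b ∈ S ∧ ∃ K, IsSimplex G k K ∧ a ⊆ K ∧ b ⊆ K) σ₁ σ₂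

/-- A local obstacle: a `k`-simplex containing at least `k-j+1` many `j`-simplices,
each lying in no other `k`-simplex. -/
def IsLocalObstacle (G : Set (Finset V)) (k j : ℕ) (K : Finset V) : Prop :=
  IsSimplex G k K ∧
    k - j + 1 ≤ {σ : Finset V | IsSimplex G j σ ∧ σ ⊆ K ∧
      ∀ K', IsSimplex G k K' → σ ⊆ K' → K' = K}.ncard

/-- The random complex `G_p` given birth times `t`: all singletons together with all
non-empty subsets of `(k+1)`-sets with birth time at most `p`. -/
def complexAt (k n : ℕ) (t : Finset (Fin n) → ℝ) (p : ℝ) : Set (Finset (Fin n)) :=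
  {A | (∃ v, A = {v}) ∨
    (A.Nonempty ∧ ∃ K : Finset (Fin n), K.card = k + 1 ∧ t K ≤ p ∧ A ⊆ K)}

/-- The distribution of birth times: i.i.d. uniform on `[0,1]`. -/
noncomputable def birthMeasure (n : ℕ) : Measure (Finset (Fin n) → ℝ) :=
  Measure.pi fun _ => volume.restrict (Set.Icc (0 : ℝ) 1)

/-- `p_{M_j}`: the supremum of the probabilities `p ∈ [0,1]` at which `G_p` contains
a copy of `M_j`. -/
noncomputable def pMj (k j n : ℕ) (t : Finset (Fin n) → ℝ) : ℝ :=
  sSup {p : ℝ | p ∈ Set.Icc (0 : ℝ) 1 ∧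
    ∃ K C J, IsMj (complexAt k n t p) k j K C J}

/-- The threshold `p_j`. -/
noncomputable def pjThreshold (k j n : ℕ) : ℝ :=
  ((j + 1 : ℝ) * Real.log n + Real.log (Real.log n)) * (Nat.factorial (k - j)) /
    (((k - j + 1 : ℕ) : ℝ) * (n : ℝ) ^ (k - j))

/-- `p_j^-`. -/
noncomputable def pjMinus (k j n : ℕ) : ℝ :=
  (1 - 1 / Real.sqrt (Real.log n)) * ((j + 1 : ℝ) * Real.log n) * (Nat.factorial (k - j)) /
    (((k - j + 1 : ℕ) : ℝ) * (n : ℝ) ^ (k - j))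

/-- `p_{j-1}^-`. -/
noncomputable def pjPrevMinus (k j n : ℕ) : ℝ :=
  (1 - 1 / Real.sqrt (Real.log n)) * ((j : ℝ) * Real.log n) * (Nat.factorial (k - j + 1)) /
    (((k - j + 2 : ℕ) : ℝ) * (n : ℝ) ^ (k - j + 1))

/-- `p_j^{(1)}`. -/
noncomputable def pjOne (k j n : ℕ) : ℝ :=
  1 / (10 * ((j : ℝ) + 1) * (Nat.choose (k + 1) (j + 1)) * (n : ℝ) ^ (k - j))

/-- The number of copies of `M_j^-` in `G`. -/
noncomputable def countMjMinus (k j : ℕ) {n : ℕ} (G : Set (Finset (Fin n))) : ℕ :=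
  {x : Finset (Fin n) × Finset (Fin n) | IsMjMinus G k j x.1 x.2}.ncard

/-- The number of copies of `M_j^*` in `G`. -/
noncomputable def countMjStar (k j : ℕ) {n : ℕ} (G : Set (Finset (Fin n))) : ℕ :=
  {x : Finset (Fin n) × Finset (Fin n) × Fin n × Fin n |
    IsMjStar G k j x.1 x.2.1 x.2.2.1 x.2.2.2}.ncard

lemma box_measure {ι : Type*} [Fintype ι] (U : Measure ℝ) [IsProbabilityMeasure U]
    (S E : Finset ι) (hd : Disjoint S E) (A B : Set ℝ) :
    (Measure.pi fun _ : ι => U).real {t | (∀ a ∈ S, t a ∈ A) ∧ ∀ d ∈ E, t d ∈ B}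
      = U.real A ^ S.card * U.real B ^ E.card := by
  have h1 : {t : ι → ℝ | (∀ a ∈ S, t a ∈ A) ∧ ∀ d ∈ E, t d ∈ B}
      = Set.pi Set.univ (fun i => if i ∈ S then A else if i ∈ E then B else Set.univ) := by
    ext t
    simp only [Set.mem_ofPred_eq, Set.mem_pi, Set.mem_univ, true_implies]
    constructor
    · rintro ⟨h1, h2⟩ i
      split_ifs with h h'
      · exact h1 i h
      · exact h2 i h'
      · trivial
    · intro h
      refine ⟨fun a ha => ?_, fun d hE => ?_⟩
      · have := h a
        rwa [if_pos ha] at this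
      · have := h d
        rwa [if_neg (fun hS => Finset.disjoint_left.1 hd hS hE), if_pos hE] at this
  have h2 : ∀ i : ι, (U (if i ∈ S then A else if i ∈ E then B else Set.univ)).toReal
      = (if i ∈ S then U.real A else 1) * (if i ∈ E then U.real B else 1) := by
    intro i
    by_cases hS : i ∈ S
    · have hE : i ∉ E := fun hE => Finset.disjoint_left.1 hd hS hE
      simp [hS, hE, Measure.real]
    · by_cases hE : i ∈ E <;> simp [hS, hE, Measure.real]
  rw [h1, Measure.real, Measure.pi_pi, ENNReal.toReal_prod, Finset.prod_congr rfl (fun i _ => h2 i),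
    Finset.prod_mul_distrib]
  simp

lemma min_measure {ι : Type*} [Fintype ι] (U : Measure ℝ) [IsProbabilityMeasure U]
    (K : ι) (E : Finset ι) (hK : K ∉ E) (q : ℝ) :
    ((E.card : ℝ) + 1) * (Measure.pi fun _ : ι => U).real {t | q < t K ∧ ∀ d ∈ E, t K < t d}
      ≤ U.real (Set.Ioi q) ^ (E.card + 1) := by
  set μ := (Measure.pi fun _ : ι => U) with hμ
  have : IsProbabilityMeasure μ := by rw [hμ]; infer_instance
  let F := insert K E
  let B : ι → Set (ι → ℝ) := fun a => {t | q < t a ∧ ∀ d ∈ F, d ≠ a → t a < t d}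
  have hBm : ∀ a, MeasurableSet (B a) := by
    intro a
    refine MeasurableSet.inter (measurableSet_lt measurable_const (measurable_pi_apply a)) ?_
    have : {t : ι → ℝ | ∀ d ∈ F, d ≠ a → t a < t d}
        = ⋂ d : ι, ⋂ (_ : d ∈ F), ⋂ (_ : d ≠ a), {t : ι → ℝ | t a < t d} := by
      ext t; simp
    change MeasurableSet {t : ι → ℝ | ∀ d ∈ F, d ≠ a → t a < t d}
    rw [this]
    exact MeasurableSet.iInter fun d => MeasurableSet.iInter fun _ => MeasurableSet.iInter fun _ =>
      measurableSet_lt (measurable_pi_apply a) (measurable_pi_apply d)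
  have hBK : B K = {t | q < t K ∧ ∀ d ∈ E, t K < t d} := by
    ext t
    simp only [B, F, Set.mem_ofPred_eq, Finset.mem_insert]
    constructor
    · rintro ⟨h1, h2⟩
      exact ⟨h1, fun d hd => h2 d (Or.inr hd) (fun h => hK (h ▸ hd))⟩
    · rintro ⟨h1, h2⟩
      refine ⟨h1, fun d hd hne => h2 d (hd.resolve_left hne)⟩
  have hsw : ∀ a ∈ F, μ.real (B a) = μ.real (B K) := by
    intro a ha
    have hmp := measurePreserving_piCongrLeft (fun _ : ι => U) (Equiv.swap a K)
    have hpre : (MeasurableEquiv.piCongrLeft (fun _ => ℝ) (Equiv.swap a K)) ⁻¹' (B a) = B K := by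
      ext t
      have hv : ∀ i, (MeasurableEquiv.piCongrLeft (fun _ => ℝ) (Equiv.swap a K)) t i
          = t (Equiv.swap a K i) := by
        intro i
        obtain ⟨i', rfl⟩ := (Equiv.swap a K).surjective i
        rw [MeasurableEquiv.coe_piCongrLeft, Equiv.piCongrLeft_apply_apply]
        simp
      have hKF : K ∈ F := Finset.mem_insert_self _ _
      have hsF : ∀ d ∈ F, Equiv.swap a K d ∈ F := by
        intro d hd
        rw [Equiv.swap_apply_def]
        split_ifs <;> assumption
      simp only [B, Set.mem_preimage, Set.mem_ofPred_eq, hv, Equiv.swap_apply_left]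
      refine and_congr_right fun _ => ⟨fun h d hd hne => ?_, fun h d hd hne => ?_⟩
      · have := h (Equiv.swap a K d) (hsF d hd) (fun h' => hne (by
          have := congrArg (Equiv.swap a K) h'
          simpa using this))
        simpa using this
      · exact h _ (hsF d hd) (fun h' => hne (by
          have := congrArg (Equiv.swap a K) h'
          simpa using this))
    rw [← hpre]
    exact (hmp.measureReal_preimage (hBm a).nullMeasurableSet).symm
  have hdisj : Set.PairwiseDisjoint (F : Set ι) B := by
    intro a ha b hb hab
    refine Set.disjoint_left.2 fun t h1 h2 => ?_
    have := h1.2 b hb (Ne.symm hab)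
    have := h2.2 a ha hab
    linarith
  have hsum : μ.real (⋃ a ∈ F, B a) = ∑ a ∈ F, μ.real (B a) :=
    measureReal_biUnion_finset hdisj (fun a _ => hBm a)
  have hc : F.card = E.card + 1 := Finset.card_insert_of_notMem hK
  rw [Finset.sum_congr rfl hsw, Finset.sum_const, hc, nsmul_eq_mul] at hsum
  have hle : μ.real (⋃ a ∈ F, B a) ≤ μ.real {t | (∀ a ∈ F, t a ∈ Set.Ioi q) ∧ ∀ d ∈ (∅ : Finset ι), t d ∈ Set.Ioi q} := by
    refine measureReal_mono ?_ (measure_ne_top _ _)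
    intro t ht
    simp only [Set.mem_iUnion] at ht
    obtain ⟨a, ha, h1, h2⟩ := ht
    refine ⟨fun d hd => ?_, by simp⟩
    by_cases hda : d = a
    · rw [hda]; exact h1
    · exact h1.trans (h2 d hd hda)
  rw [box_measure U F ∅ (by simp) _ _, hc] at hle
  rw [← hBK]
  push_cast at hsum
  rw [← hsum]
  simpa using hle

lemma second_moment {Ω ι : Type*} [MeasurableSpace Ω] (μ : Measure Ω) [IsProbabilityMeasure μ]
    (F : Finset ι) (A : ι → Set Ω) (hA : ∀ i, MeasurableSet (A i)) (ε : ℝ) 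
    (hAB : ∀ i ∈ F, ∀ i' ∈ F, i ≠ i' →
      μ.real (A i ∩ A i') ≤ (1 + ε) * (μ.real (A i) * μ.real (A i')))
    (hε : 0 ≤ ε) (m : ℝ) (hm : m = ∑ i ∈ F, μ.real (A i)) (hm0 : 0 < m) :
    μ.real {ω | ∀ i ∈ F, ω ∉ A i} ≤ 1 / m + ε := by
  let I : ι → Ω → ℝ := fun i => (A i).indicator 1
  have hint : ∀ i i', Integrable (fun ω => I i ω * I i' ω) μ ∧
      ∫ ω, I i ω * I i' ω ∂μ = μ.real (A i ∩ A i') := by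
    intro i i'
    have h : (fun ω => I i ω * I i' ω) = (A i ∩ A i').indicator 1 := by
      rw [Set.inter_indicator_one]; rfl
    rw [h]
    refine ⟨(integrable_const 1).indicator ((hA i).inter (hA i')), ?_⟩
    exact integral_indicator_one ((hA i).inter (hA i'))
  have hint1 : ∀ i, Integrable (I i) μ ∧ ∫ ω, I i ω ∂μ = μ.real (A i) := fun i =>
    ⟨(integrable_const 1).indicator (hA i), integral_indicator_one (hA i)⟩
  have hX2 : ∀ ω, (∑ i ∈ F, I i ω - m)^2
      = (∑ i ∈ F, ∑ i' ∈ F, I i ω * I i' ω) + ((-2 * m) * (∑ i ∈ F, I i ω) + m^2) := by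
    intro ω
    rw [← Finset.sum_mul_sum]; ring
  have i1 : Integrable (fun ω => ∑ i ∈ F, ∑ i' ∈ F, I i ω * I i' ω) μ :=
    integrable_finsetSum _ fun i _ => integrable_finsetSum _ fun i' _ => (hint i i').1
  have i2 : Integrable (fun ω => ∑ i ∈ F, I i ω) μ := integrable_finsetSum _ fun i _ => (hint1 i).1
  have i3 : Integrable (fun ω => (-2 * m) * (∑ i ∈ F, I i ω) + m^2) μ :=
    (i2.const_mul _).add (integrable_const _)
  have hEX : ∫ ω, (∑ i ∈ F, I i ω - m)^2 ∂μ = (∑ i ∈ F, ∑ i' ∈ F, μ.real (A i ∩ A i')) - m^2 := by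
    simp_rw [hX2]
    rw [integral_add i1 i3, integral_add (i2.const_mul _) (integrable_const _), integral_const_mul,
      integral_finsetSum _ (fun i _ => (hint1 i).1),
      integral_finsetSum _ (fun i _ => integrable_finsetSum _ fun i' _ => (hint i i').1)]
    simp_rw [fun i => integral_finsetSum F (fun i' _ => (hint i i').1), fun i i' => (hint i i').2,
      fun i => (hint1 i).2]
    rw [← hm]
    simp
    ring
  have hb : ∑ i ∈ F, ∑ i' ∈ F, μ.real (A i ∩ A i') ≤ m + (1 + ε) * m^2 := by
    have : ∀ i ∈ F, ∑ i' ∈ F, μ.real (A i ∩ A i') ≤ 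
        μ.real (A i) + (1 + ε) * μ.real (A i) * m := by
      intro i hi
      rw [hm, Finset.mul_sum, ← Finset.add_sum_erase _ _ hi]
      have h0 : ∑ i' ∈ F.erase i, μ.real (A i ∩ A i') ≤ 
          ∑ i' ∈ F, (1 + ε) * μ.real (A i) * μ.real (A i') := by
        refine (Finset.sum_le_sum fun i' hi' => ?_).trans (Finset.sum_le_sum_of_subset_of_nonneg
          (Finset.erase_subset i F) fun i' _ _ => by positivity)
        rw [mul_assoc]
        exact hAB i hi i' (Finset.mem_of_mem_erase hi') (Finset.ne_of_mem_erase hi').symm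
      rw [Set.inter_self]
      linarith
    refine (Finset.sum_le_sum this).trans (le_of_eq ?_)
    rw [Finset.sum_add_distrib, ← Finset.sum_mul, ← Finset.mul_sum, ← hm]; ring
  set Z := {ω | ∀ i ∈ F, ω ∉ A i}
  have hZm : MeasurableSet Z := by
    have : Z = ⋂ i : ι, ⋂ (_ : i ∈ F), (A i)ᶜ := by ext; simp [Z]
    rw [this]
    exact Finset.measurableSet_biInter F fun i _ => (hA i).compl
  have hlow : m^2 * μ.real Z ≤ ∫ ω, (∑ i ∈ F, I i ω - m)^2 ∂μ := by
    rw [← integral_indicator_one hZm, ← integral_const_mul]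
    refine integral_mono (((integrable_const 1).indicator hZm).const_mul _) ?_ ?_
    · simp_rw [hX2]; exact i1.add i3
    · intro ω
      by_cases hω : ω ∈ Z
      · have : ∑ i ∈ F, I i ω = 0 := Finset.sum_eq_zero fun i hi => by
          simp only [I]; exact Set.indicator_of_notMem (hω i hi) _
        simp [hω, this]
      · simp [hω]; positivity
  have h3 : m^2 * μ.real Z ≤ m^2 * (1 / m + ε) := by
    rw [hEX] at hlow
    have : m^2 * (1/m+ε) = m + ε * m^2 := by field_simp
    rw [this]; nlinarith
  exact le_of_mul_le_mul_left h3 (by positivity)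

/-- The other `(k+1)`-sets containing a petal of the flower. -/
noncomputable def dang (k : ℕ) {n : ℕ} (K C : Finset (Fin n)) : Finset (Finset (Fin n)) :=
  Finset.univ.filter (fun K' => K'.card = k + 1 ∧ K' ≠ K ∧ ∃ w ∈ K \ C, insert w C ⊆ K')

lemma mem_dang {k n : ℕ} {K C K' : Finset (Fin n)} :
    K' ∈ dang k K C ↔ K'.card = k + 1 ∧ K' ≠ K ∧ ∃ w ∈ K \ C, insert w C ⊆ K' := by
  simp [dang]

lemma card_supersets_le (k n : ℕ) (Q : Finset (Fin n)) :
    (Finset.univ.filter (fun K' : Finset (Fin n) => K'.card = k + 1 ∧ Q ⊆ K')).card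
      ≤ Nat.choose (n - Q.card) (k + 1 - Q.card) := by
  have h : (Finset.powersetCard (k + 1 - Q.card) Qᶜ).card
      = Nat.choose (n - Q.card) (k + 1 - Q.card) := by
    rw [Finset.card_powersetCard, Finset.card_compl, Fintype.card_fin]
  rw [← h]
  refine Finset.card_le_card_of_injOn (fun K' => K' \ Q) ?_ ?_
  · intro K' hK'
    simp only [Finset.coe_filter, Set.mem_ofPred_eq, Finset.mem_univ, true_and] at hK'
    simp only [Finset.mem_coe, Finset.mem_powersetCard]
    refine ⟨?_, ?_⟩
    · intro x hx
      simp only [Finset.mem_sdiff] at hx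
      simpa using hx.2
    · rw [Finset.card_sdiff_of_subset hK'.2, hK'.1]
  · intro K₁ h1 K₂ h2 heq
    simp only [Finset.coe_filter, Set.mem_ofPred_eq, Finset.mem_univ, true_and] at h1 h2
    have heq' : K₁ \ Q = K₂ \ Q := heq
    rw [← Finset.sdiff_union_of_subset h1.2, heq', Finset.sdiff_union_of_subset h2.2]

lemma dang_upper {k j n : ℕ} (hjk : j < k) {K C : Finset (Fin n)} (hK : K.card = k + 1)
    (hC : C.card = j) (hCK : C ⊆ K) :
    (dang k K C).card ≤ (k - j + 1) * Nat.choose (n - (j + 1)) (k - j) := by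
  have hsub : dang k K C ⊆ (K \ C).biUnion (fun w =>
      Finset.univ.filter (fun K' : Finset (Fin n) => K'.card = k + 1 ∧ insert w C ⊆ K')) := by
    intro K' h
    obtain ⟨h1, h2, w, hw, h3⟩ := mem_dang.1 h
    simp only [Finset.mem_biUnion]
    exact ⟨w, hw, by simp [h1, h3]⟩
  have hc : (K \ C).card = k - j + 1 := by
    rw [Finset.card_sdiff_of_subset hCK, hK, hC]; omega
  refine (Finset.card_le_card hsub).trans ?_
  rw [← hc]
  refine Finset.card_biUnion_le_card_mul _ _ _ fun w hw => ?_
  have hw' : w ∉ C := (Finset.mem_sdiff.1 hw).2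
  refine (card_supersets_le k n (insert w C)).trans (le_of_eq ?_)
  rw [Finset.card_insert_of_notMem hw', hC]
  congr 1
  omega

lemma dang_lower {k j n : ℕ} (hjk : j < k) {K C : Finset (Fin n)} (hK : K.card = k + 1)
    (hC : C.card = j) (hCK : C ⊆ K) :
    (k - j + 1) * Nat.choose (n - (k + 1)) (k - j) ≤ (dang k K C).card := by
  have hc : (K \ C).card = k - j + 1 := by
    rw [Finset.card_sdiff_of_subset hCK, hK, hC]; omega
  have h : ((K \ C) ×ˢ Finset.powersetCard (k - j) Kᶜ).card
      = (k - j + 1) * Nat.choose (n - (k + 1)) (k - j) := by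
    rw [Finset.card_product, hc, Finset.card_powersetCard, Finset.card_compl, Fintype.card_fin, hK]
  rw [← h]
  refine Finset.card_le_card_of_injOn (fun x => insert x.1 C ∪ x.2) ?_ ?_
  · rintro ⟨w, T⟩ hx
    simp only [Finset.coe_product, Set.mem_prod, Finset.mem_coe, Finset.mem_powersetCard] at hx
    obtain ⟨hw, hT, hTc⟩ := hx
    have hwC : w ∉ C := (Finset.mem_sdiff.1 hw).2
    have hwK : w ∈ K := (Finset.mem_sdiff.1 hw).1
    have hd : Disjoint (insert w C) T := by
      rw [Finset.disjoint_left]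
      intro x hx hxT
      have : x ∉ K := by simpa using hT hxT
      rcases Finset.mem_insert.1 hx with rfl | hx
      · exact this hwK
      · exact this (hCK hx)
    refine mem_dang.2 ⟨?_, ?_, w, hw, Finset.subset_union_left⟩
    · rw [Finset.card_union_of_disjoint hd, Finset.card_insert_of_notMem hwC, hC, hTc]; omega
    · intro heq
      have : T.Nonempty := by rw [← Finset.card_pos, hTc]; omega
      obtain ⟨x, hx⟩ := this
      have h1 : x ∉ K := by simpa using hT hx
      exact h1 (heq ▸ Finset.mem_union_right _ hx)
  · rintro ⟨w, T⟩ hx ⟨w', T'⟩ hx' heq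
    simp only [Finset.coe_product, Set.mem_prod, Finset.mem_coe, Finset.mem_powersetCard] at hx hx'
    have key : ∀ (w : Fin n) (T : Finset (Fin n)), w ∈ K \ C → T ⊆ Kᶜ →
        (insert w C ∪ T) \ K = T ∧ (insert w C ∪ T) ∩ (K \ C) = {w} := by
      intro w T hw hT
      have hw1 := Finset.mem_sdiff.1 hw
      constructor
      · ext x
        have h1 : x ∈ T → x ∉ K := fun h => by simpa using hT h
        have h2 : x ∈ C → x ∈ K := fun h => hCK h
        have h3 : x = w → x ∈ K := fun h => h ▸ hw1.1
        simp only [Finset.mem_sdiff, Finset.mem_union, Finset.mem_insert]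
        tauto
      · ext x
        have h1 : x ∈ T → x ∉ K := fun h => by simpa using hT h
        have h3 : x = w → x ∈ K := fun h => h ▸ hw1.1
        have h4 : x = w → x ∉ C := fun h => h ▸ hw1.2
        simp only [Finset.mem_sdiff, Finset.mem_union, Finset.mem_insert, Finset.mem_inter,
          Finset.mem_singleton]
        tauto
    have heq' : insert w C ∪ T = insert w' C ∪ T' := heq
    obtain ⟨a1, a2⟩ := key w T hx.1 hx.2.1
    obtain ⟨b1, b2⟩ := key w' T' hx'.1 hx'.2.1
    rw [heq'] at a1 a2
    rw [a1] at b1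
    rw [a2] at b2
    rw [Finset.singleton_inj] at b2
    rw [b1, b2]

lemma dang_inter {k j n : ℕ} (hjk : j < k) (hn : 1 ≤ n) {K C K' C' : Finset (Fin n)}
    (hK : K.card = k + 1) (hC : C.card = j) (hCK : C ⊆ K)
    (hK' : K'.card = k + 1) (hC' : C'.card = j) (hCK' : C' ⊆ K') (hne : K ≠ K')
    (hnd : K ∉ dang k K' C') :
    (dang k K C ∩ dang k K' C').card ≤ (k - j + 1) ^ 2 * n ^ (k - j - 1) := by
  have hsub : dang k K C ∩ dang k K' C' ⊆ ((K \ C) ×ˢ (K' \ C')).biUnion (fun w =>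
      Finset.univ.filter (fun K'' : Finset (Fin n) =>
        K''.card = k + 1 ∧ insert w.1 C ∪ insert w.2 C' ⊆ K'')) := by
    intro K'' h
    obtain ⟨h, h'⟩ := Finset.mem_inter.1 h
    obtain ⟨h1, h2, w, hw, h3⟩ := mem_dang.1 h
    obtain ⟨h1', h2', w', hw', h3'⟩ := mem_dang.1 h'
    simp only [Finset.mem_biUnion]
    refine ⟨(w, w'), Finset.mem_product.2 ⟨hw, hw'⟩, ?_⟩
    simp only [Finset.mem_filter, Finset.mem_univ, true_and]
    exact ⟨h1, Finset.union_subset h3 h3'⟩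
  have hc : (K \ C).card = k - j + 1 := by
    rw [Finset.card_sdiff_of_subset hCK, hK, hC]; omega
  have hc' : (K' \ C').card = k - j + 1 := by
    rw [Finset.card_sdiff_of_subset hCK', hK', hC']; omega
  have hcp : ((K \ C) ×ˢ (K' \ C')).card = (k - j + 1) ^ 2 := by
    rw [Finset.card_product, hc, hc']; ring
  refine (Finset.card_le_card hsub).trans ?_
  rw [← hcp]
  refine Finset.card_biUnion_le_card_mul _ _ _ ?_
  rintro ⟨w, w'⟩ hww
  obtain ⟨hw, hw'⟩ := Finset.mem_product.1 hww
  simp only at hw hw' ⊢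
  have hwC : w ∉ C := (Finset.mem_sdiff.1 hw).2
  have hwC' : w' ∉ C' := (Finset.mem_sdiff.1 hw').2
  have e1 : (insert w C).card = j + 1 := by rw [Finset.card_insert_of_notMem hwC, hC]
  have e2 : (insert w' C').card = j + 1 := by rw [Finset.card_insert_of_notMem hwC', hC']
  have hQ : j + 2 ≤ (insert w C ∪ insert w' C').card := by
    by_contra hlt
    have hle : (insert w C ∪ insert w' C').card ≤ j + 1 := by omega
    have h1 : insert w C = insert w C ∪ insert w' C' :=
      Finset.eq_of_subset_of_card_le Finset.subset_union_left (by omega)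
    have h2 : insert w' C' ⊆ insert w C := h1 ▸ Finset.subset_union_right
    refine hnd (mem_dang.2 ⟨hK, hne, w', hw', h2.trans ?_⟩)
    exact Finset.insert_subset (Finset.mem_sdiff.1 hw).1 hCK
  refine (card_supersets_le k n _).trans ((Nat.choose_le_pow _ _).trans ?_)
  refine (Nat.pow_le_pow_left (Nat.sub_le _ _) _).trans ?_
  exact Nat.pow_le_pow_right hn (by omega)

lemma isSimplex_iff {k n : ℕ} (hk : 2 ≤ k) (t : Finset (Fin n) → ℝ) (p : ℝ) (K : Finset (Fin n)) :
    IsSimplex (complexAt k n t p) k K ↔ K.card = k + 1 ∧ t K ≤ p := by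
  constructor
  · rintro ⟨h | ⟨_, K', h1, h2, h3⟩, hc⟩
    · obtain ⟨v, rfl⟩ := h
      simp at hc
      omega
    · have : K = K' := Finset.eq_of_subset_of_card_le h3 (by omega)
      subst this
      exact ⟨hc, h2⟩
  · rintro ⟨h1, h2⟩
    refine ⟨Or.inr ⟨?_, K, h1, h2, subset_rfl⟩, h1⟩
    rw [← Finset.card_pos]; omega

lemma isMjMinus_iff {k j n : ℕ} (hk : 2 ≤ k) (hj : 1 ≤ j) (t : Finset (Fin n) → ℝ) (p : ℝ)
    (K C : Finset (Fin n)) :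
    IsMjMinus (complexAt k n t p) k j K C ↔
      K.card = k + 1 ∧ C.card = j ∧ C ⊆ K ∧ t K ≤ p ∧ ∀ d ∈ dang k K C, p < t d := by
  unfold IsMjMinus
  simp only [isSimplex_iff hk]
  constructor
  · rintro ⟨⟨h1, h2⟩, _, h3, h4, h5⟩
    refine ⟨h1, h3, h4, h2, fun d hd => ?_⟩
    obtain ⟨a, b, w, hw, hs⟩ := mem_dang.1 hd
    by_contra hlt
    exact b (h5 _ ⟨w, hw, rfl⟩ d ⟨a, not_lt.1 hlt⟩ hs)
  · rintro ⟨h1, h3, h4, h2, h5⟩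
    refine ⟨⟨h1, h2⟩, Or.inr ⟨?_, K, h1, h2, h4⟩, h3, h4, ?_⟩
    · rw [← Finset.card_pos]; omega
    · rintro P ⟨w, hw, rfl⟩ K' ⟨a, b⟩ hs
      by_contra hne
      exact absurd (h5 K' (mem_dang.2 ⟨a, hne, w, hw, hs⟩)) (not_lt.2 b)

/-- Deterministic part. -/
lemma good_of_events {k j n : ℕ} (hk : 2 ≤ k) (hj : 1 ≤ j) (t : Finset (Fin n) → ℝ) (pm pp : ℝ)
    (hpm : 0 ≤ pm) (hmp : pm ≤ pp)
    (h1 : ∀ K C : Finset (Fin n), K.card = k + 1 → C.card = j → C ⊆ K →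
      ¬ (t K ∈ Set.Ioc pm pp ∧ ∀ d ∈ dang k K C, pp < t d))
    (h2 : ∀ K C : Finset (Fin n), K.card = k + 1 → C.card = j → C ⊆ K →
      ¬ (pp < t K ∧ ∀ d ∈ dang k K C, t K < t d))
    (h3 : ∃ K C : Finset (Fin n), K.card = k + 1 ∧ C.card = j ∧ C ⊆ K ∧
      t K ≤ pm ∧ ∀ d ∈ dang k K C, pp < t d) :
    ∃ K C : Finset (Fin n), ∀ p : ℝ, pm ≤ p → p < pMj k j n t →
      IsMjMinus (complexAt k n t p) k j K C := by
  rcases le_or_gt (pMj k j n t) pp with hle | hgt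
  · obtain ⟨K, C, a, b, c, d, e⟩ := h3
    refine ⟨K, C, fun p hp hp' => (isMjMinus_iff hk hj t p K C).2
      ⟨a, b, c, d.trans hp, fun x hx => ?_⟩⟩
    have := e x hx
    linarith
  · set S : Set ℝ := {p : ℝ | p ∈ Set.Icc (0 : ℝ) 1 ∧
      ∃ K C J, IsMj (complexAt k n t p) k j K C J} with hS
    have hsup : pMj k j n t = sSup S := rfl
    have hne : S.Nonempty := by
      by_contra hemp
      rw [Set.not_nonempty_iff_eq_empty] at hemp
      rw [hsup, hemp, Real.sSup_empty] at hgt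
      linarith
    have hex : ∃ x : Finset (Fin n) × Finset (Fin n), ∀ p < pMj k j n t, ∃ p', p < p' ∧
        IsMjMinus (complexAt k n t p') k j x.1 x.2 := by
      by_contra hcon
      push Not at hcon
      choose f hf hf' using hcon
      have : Nonempty (Set.Iio (pMj k j n t)) := ⟨⟨pp, hgt⟩⟩
      obtain ⟨M, hM⟩ := Finite.exists_le (fun x => (⟨f x, hf x⟩ : Set.Iio (pMj k j n t)))
      have hM2 : (M : ℝ) < sSup S := M.2
      obtain ⟨p', hp', hlt⟩ := exists_lt_of_lt_csSup hne hM2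
      obtain ⟨_, K, C, J, hJ⟩ := hp'
      refine hf' (K, C) p' (lt_of_le_of_lt ?_ hlt) hJ.1
      exact hM (K, C)
    obtain ⟨⟨K, C⟩, hx⟩ := hex
    refine ⟨K, C, fun p hp hp' => ?_⟩
    obtain ⟨p', hlt, hmj⟩ := hx (max p pp) (max_lt hp' hgt)
    obtain ⟨a, b, c, d, e⟩ := (isMjMinus_iff hk hj t p' K C).1 hmj
    have l1 : p < p' := (le_max_left _ _).trans_lt hlt
    have l2 : pp < p' := (le_max_right _ _).trans_lt hlt
    refine (isMjMinus_iff hk hj t p K C).2 ⟨a, b, c, ?_, fun x hx => l1.trans (e x hx)⟩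
    have n1 := h1 K C a b c
    have n2 := h2 K C a b c
    by_contra hbig
    rcases le_or_gt (t K) pp with q | q
    · exact n1 ⟨⟨by linarith, q⟩, fun x hx => l2.trans (e x hx)⟩
    · exact n2 ⟨q, fun x hx => d.trans_lt (e x hx)⟩

instance unif_prob : IsProbabilityMeasure (volume.restrict (Set.Icc (0 : ℝ) 1)) :=
  ⟨by simp⟩

lemma unif_Ioi {q : ℝ} (h0 : 0 ≤ q) (h1 : q ≤ 1) :
    (volume.restrict (Set.Icc (0 : ℝ) 1)).real (Set.Ioi q) = 1 - q := by
  have : Set.Ioi q ∩ Set.Icc 0 1 = Set.Ioc q 1 := by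
    ext x; simp only [Set.mem_inter_iff, Set.mem_Ioi, Set.mem_Icc, Set.mem_Ioc]
    constructor
    · rintro ⟨a, b, c⟩; exact ⟨a, c⟩
    · rintro ⟨a, b⟩; exact ⟨a, by linarith, b⟩
  rw [measureReal_restrict_apply measurableSet_Ioi, this, Real.volume_real_Ioc_of_le h1]

lemma unif_Iic {q : ℝ} (h0 : 0 ≤ q) (h1 : q ≤ 1) :
    (volume.restrict (Set.Icc (0 : ℝ) 1)).real (Set.Iic q) = q := by
  have : Set.Iic q ∩ Set.Icc 0 1 = Set.Icc 0 q := by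
    ext x; simp only [Set.mem_inter_iff, Set.mem_Iic, Set.mem_Icc]
    constructor
    · rintro ⟨a, b, c⟩; exact ⟨b, a⟩
    · rintro ⟨a, b⟩; exact ⟨b, a, by linarith⟩
  rw [measureReal_restrict_apply measurableSet_Iic, this, Real.volume_real_Icc_of_le h0, sub_zero]

lemma unif_Ioc {p q : ℝ} (h0 : 0 ≤ p) (hpq : p ≤ q) (h1 : q ≤ 1) :
    (volume.restrict (Set.Icc (0 : ℝ) 1)).real (Set.Ioc p q) = q - p := by
  have : Set.Ioc p q ∩ Set.Icc 0 1 = Set.Ioc p q := by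
    ext x; simp only [Set.mem_inter_iff, Set.mem_Ioc, Set.mem_Icc]
    constructor
    · rintro ⟨a, b⟩; exact a
    · rintro ⟨a, b⟩; exact ⟨⟨a, b⟩, by linarith, by linarith⟩
  rw [measureReal_restrict_apply measurableSet_Ioc, this, Real.volume_real_Ioc_of_le hpq]

lemma not_mem_dang {k n : ℕ} (K C : Finset (Fin n)) : K ∉ dang k K C := fun h =>
  (mem_dang.1 h).2.1 rfl

instance birth_prob (n : ℕ) : IsProbabilityMeasure (birthMeasure n) := by
  unfold birthMeasure; infer_instance

lemma prob_bound {k j n : ℕ} (hk : 2 ≤ k) (hj : 1 ≤ j) (hjk : j < k) (hn : k + 1 ≤ n)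
    (pm pp : ℝ) (hpm : 0 < pm) (hmp : pm ≤ pp) (hpp : pp < 1) :
    (birthMeasure n).real {t : Finset (Fin n) → ℝ |
      ∃ K C : Finset (Fin n), ∀ p : ℝ, pm ≤ p → p < pMj k j n t →
          IsMjMinus (complexAt k n t p) k j K C}ᶜ ≤
      ((n.choose (k + 1) : ℝ) * ((k + 1).choose j : ℝ)) *
        ((pp - pm) * (1 - pp) ^ ((k - j + 1) * Nat.choose (n - (k + 1)) (k - j))
          + (1 - pp) ^ ((k - j + 1) * Nat.choose (n - (k + 1)) (k - j))
            / ((((k - j + 1) * Nat.choose (n - (k + 1)) (k - j) : ℕ) : ℝ) + 1))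
      + (1 / ((n.choose (k + 1) : ℝ) *
          (pm * (1 - pp) ^ ((k - j + 1) * Nat.choose (n - (j + 1)) (k - j))))
        + (((1 - pp) ^ ((k - j + 1) ^ 2 * n ^ (k - j - 1)))⁻¹ - 1)) := by
  set μ := birthMeasure n with hμ
  set Nlo := (k - j + 1) * Nat.choose (n - (k + 1)) (k - j) with hNlo
  set Nhi := (k - j + 1) * Nat.choose (n - (j + 1)) (k - j) with hNhi
  set M := (k - j + 1) ^ 2 * n ^ (k - j - 1) with hM
  have hpp0 : 0 ≤ pp := hpm.le.trans hmp
  set y := 1 - pp with hy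
  have hy0 : 0 < y := by linarith
  have hy1 : y ≤ 1 := by linarith
  let KK : Finset (Finset (Fin n)) := Finset.powersetCard (k + 1) Finset.univ
  have hKKc : KK.card = n.choose (k + 1) := by simp [KK]
  have hKK : ∀ K, K ∈ KK ↔ K.card = k + 1 := by intro K; simp [KK, Finset.mem_powersetCard]
  let PP : Finset (Σ _ : Finset (Fin n), Finset (Fin n)) := KK.sigma (fun K => Finset.powersetCard j K)
  have hPPc : PP.card = n.choose (k + 1) * (k + 1).choose j := by
    rw [Finset.card_sigma, ← hKKc, Finset.sum_congr rfl (g := fun _ => (k+1).choose j)]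
    · simp
    · intro K hK
      rw [Finset.card_powersetCard, (hKK K).1 hK]
  have hPP : ∀ x, x ∈ PP ↔ x.1.card = k + 1 ∧ x.2 ⊆ x.1 ∧ x.2.card = j := by
    intro x; simp only [PP, Finset.mem_sigma, hKK, Finset.mem_powersetCard]
  let B1 : (Σ _ : Finset (Fin n), Finset (Fin n)) → Set (Finset (Fin n) → ℝ) := fun x =>
    {t | (∀ a ∈ ({x.1} : Finset (Finset (Fin n))), t a ∈ Set.Ioc pm pp) ∧
      ∀ d ∈ dang k x.1 x.2, t d ∈ Set.Ioi pp}
  let B2 : (Σ _ : Finset (Fin n), Finset (Fin n)) → Set (Finset (Fin n) → ℝ) := fun x =>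
    {t | pp < t x.1 ∧ ∀ d ∈ dang k x.1 x.2, t x.1 < t d}
  have hcen : ∀ K : Finset (Fin n), ∃ C : Finset (Fin n), K.card = k + 1 → C ⊆ K ∧ C.card = j := by
    intro K
    by_cases h : K.card = k + 1
    · obtain ⟨C, h1, h2⟩ := Finset.exists_subset_card_eq (s := K) (n := j) (by omega)
      exact ⟨C, fun _ => ⟨h1, h2⟩⟩
    · exact ⟨∅, fun h' => absurd h' h⟩
  choose cen hcen using hcen
  let A : Finset (Fin n) → Set (Finset (Fin n) → ℝ) := fun K =>
    {t | (∀ a ∈ ({K} : Finset (Finset (Fin n))), t a ∈ Set.Iic pm) ∧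
      ∀ d ∈ dang k K (cen K), t d ∈ Set.Ioi pp}
  have hsub : {t : Finset (Fin n) → ℝ |
      ∃ K C : Finset (Fin n), ∀ p : ℝ, pm ≤ p → p < pMj k j n t →
          IsMjMinus (complexAt k n t p) k j K C}ᶜ ⊆
      (⋃ x ∈ PP, B1 x ∪ B2 x) ∪ {t | ∀ K ∈ KK, t ∉ A K} := by
    intro t ht
    by_contra hnot
    apply ht
    simp only [Set.mem_union, Set.mem_iUnion, not_or, not_exists] at hnot
    obtain ⟨hn1, hn2⟩ := hnot
    refine good_of_events hk hj t pm pp hpm.le hmp ?_ ?_ ?_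
    · rintro K C a b c ⟨d, e⟩
      refine (hn1 ⟨K, C⟩ ((hPP _).2 ⟨a, c, b⟩)).1 ⟨?_, e⟩
      intro z hz
      rw [Finset.mem_singleton] at hz
      rw [hz]; exact d
    · rintro K C a b c de
      exact (hn1 ⟨K, C⟩ ((hPP _).2 ⟨a, c, b⟩)).2 de
    · simp only [Set.mem_ofPred_eq, not_forall, not_not] at hn2
      obtain ⟨K, hK, hA⟩ := hn2
      have hK' := (hKK K).1 hK
      exact ⟨K, cen K, hK', (hcen K hK').2, (hcen K hK').1, hA.1 K (Finset.mem_singleton_self K), hA.2⟩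
  have hB1 : ∀ x ∈ PP, μ.real (B1 x) ≤ (pp - pm) * y ^ Nlo := by
    intro x hx
    obtain ⟨a, b, c⟩ := (hPP x).1 hx
    have := box_measure (volume.restrict (Set.Icc (0 : ℝ) 1)) {x.1} (dang k x.1 x.2)
      (Finset.disjoint_singleton_left.2 (not_mem_dang _ _)) (Set.Ioc pm pp) (Set.Ioi pp)
    rw [unif_Ioi hpp0 hpp.le, unif_Ioc hpm.le hmp hpp.le, Finset.card_singleton, pow_one] at this
    refine (le_of_eq this).trans ?_
    refine mul_le_mul_of_nonneg_left ?_ (by linarith)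
    exact pow_le_pow_of_le_one hy0.le hy1 (dang_lower hjk a c b)
  have hB2 : ∀ x ∈ PP, μ.real (B2 x) ≤ y ^ Nlo / ((Nlo : ℝ) + 1) := by
    intro x hx
    obtain ⟨a, b, c⟩ := (hPP x).1 hx
    have := min_measure (volume.restrict (Set.Icc (0 : ℝ) 1)) x.1 (dang k x.1 x.2)
      (not_mem_dang _ _) pp
    rw [unif_Ioi hpp0 hpp.le] at this
    have hlo : Nlo ≤ (dang k x.1 x.2).card := dang_lower hjk a c b
    have hlo' : (Nlo : ℝ) ≤ ((dang k x.1 x.2).card : ℝ) := by exact_mod_cast hlo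
    rw [le_div_iff₀ (by positivity)]
    have h2 : y ^ ((dang k x.1 x.2).card + 1) ≤ y ^ Nlo :=
      pow_le_pow_of_le_one hy0.le hy1 (by omega)
    refine le_trans ?_ (this.trans h2)
    rw [mul_comm]
    exact mul_le_mul_of_nonneg_right (by linarith) measureReal_nonneg
  have hAr : ∀ K ∈ KK, μ.real (A K) = pm * y ^ (dang k K (cen K)).card := by
    intro K hK
    have := box_measure (volume.restrict (Set.Icc (0 : ℝ) 1)) {K} (dang k K (cen K))
      (Finset.disjoint_singleton_left.2 (not_mem_dang _ _)) (Set.Iic pm) (Set.Ioi pp)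
    rw [unif_Ioi hpp0 hpp.le, unif_Iic hpm.le (by linarith), Finset.card_singleton, pow_one] at this
    exact this
  have hAm : ∀ K, MeasurableSet (A K) := by
    intro K
    have : A K = (⋂ a ∈ ({K} : Finset (Finset (Fin n))), {t | t a ∈ Set.Iic pm}) ∩
        ⋂ d ∈ dang k K (cen K), {t | t d ∈ Set.Ioi pp} := by
      ext t; simp [A]
    rw [this]
    refine MeasurableSet.inter (Finset.measurableSet_biInter _ fun a _ => ?_)
      (Finset.measurableSet_biInter _ fun a _ => ?_)
    · exact measurable_pi_apply a measurableSet_Iic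
    · exact measurable_pi_apply a measurableSet_Ioi
  have hAA : ∀ K ∈ KK, ∀ K' ∈ KK, K ≠ K' → μ.real (A K ∩ A K') ≤
      (1 + ((y ^ M)⁻¹ - 1)) * (μ.real (A K) * μ.real (A K')) := by
    intro K hK K' hK' hne
    have hc := (hKK K).1 hK
    have hc' := (hKK K').1 hK'
    by_cases hd : K ∈ dang k K' (cen K') ∨ K' ∈ dang k K (cen K)
    · have : A K ∩ A K' = ∅ := by
        ext t
        simp only [Set.mem_inter_iff, Set.mem_empty_iff_false, iff_false]
        rintro ⟨⟨a, b⟩, c, d⟩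
        have a' : t K ≤ pm := a K (Finset.mem_singleton_self _)
        have c' : t K' ≤ pm := c K' (Finset.mem_singleton_self _)
        rcases hd with hd | hd
        · have : pp < t K := d K hd
          linarith
        · have : pp < t K' := b K' hd
          linarith
      rw [this, measureReal_empty]
      have : 0 ≤ (y ^ M)⁻¹ := by positivity
      have h1 : 0 ≤ μ.real (A K) * μ.real (A K') := by positivity
      nlinarith
    · push Not at hd
      have hdis : Disjoint ({K, K'} : Finset (Finset (Fin n))) (dang k K (cen K) ∪ dang k K' (cen K')) := by
        rw [Finset.disjoint_left]
        intro x hx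
        rw [Finset.mem_insert, Finset.mem_singleton] at hx
        rw [Finset.mem_union]
        rcases hx with rfl | rfl
        · exact fun h => h.elim (not_mem_dang _ _) hd.1
        · exact fun h => h.elim hd.2 (not_mem_dang _ _)
      have hbox := box_measure (volume.restrict (Set.Icc (0 : ℝ) 1)) {K, K'}
        (dang k K (cen K) ∪ dang k K' (cen K')) hdis (Set.Iic pm) (Set.Ioi pp)
      rw [unif_Ioi hpp0 hpp.le, unif_Iic hpm.le (by linarith), Finset.card_pair hne] at hbox
      have hle : μ.real (A K ∩ A K') ≤ pm ^ 2 * y ^ (dang k K (cen K) ∪ dang k K' (cen K')).card := by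
        rw [← hbox]
        refine measureReal_mono ?_ (measure_ne_top (birthMeasure n) _)
        rintro t ⟨⟨a, b⟩, c, d⟩
        refine ⟨fun x hx => ?_, fun x hx => ?_⟩
        · rw [Finset.mem_insert] at hx
          rcases hx with rfl | hx
          · exact a x (Finset.mem_singleton_self _)
          · exact c x hx
        · rcases Finset.mem_union.1 hx with hx | hx
          · exact b x hx
          · exact d x hx
      refine hle.trans ?_
      rw [hAr K hK, hAr K' hK']
      have hcard := Finset.card_union_add_card_inter (dang k K (cen K)) (dang k K' (cen K'))
      have hint : (dang k K (cen K) ∩ dang k K' (cen K')).card ≤ M :=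
        dang_inter hjk (by omega) hc (hcen K hc).2 (hcen K hc).1 hc' (hcen K' hc').2 (hcen K' hc').1
          hne hd.1
      have hpow : y ^ (dang k K (cen K) ∪ dang k K' (cen K')).card * y ^ M ≤
          y ^ (dang k K (cen K)).card * y ^ (dang k K' (cen K')).card := by
        rw [← pow_add, ← pow_add, ← hcard]
        exact pow_le_pow_of_le_one hy0.le hy1 (by omega)
      have hyM : 0 < y ^ M := by positivity
      have e : (1 + ((y ^ M)⁻¹ - 1)) * (pm * y ^ (dang k K (cen K)).card * (pm * y ^ (dang k K' (cen K')).card))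
        = pm ^ 2 * ((y ^ (dang k K (cen K)).card * y ^ (dang k K' (cen K')).card) / y ^ M) := by
        field_simp; ring
      rw [e]
      refine mul_le_mul_of_nonneg_left ?_ (by positivity)
      rw [le_div_iff₀ hyM]
      exact hpow
  have hε : 0 ≤ (y ^ M)⁻¹ - 1 := by
    have : y ^ M ≤ 1 := pow_le_one₀ hy0.le hy1
    have := (one_le_inv₀ (by positivity : 0 < y ^ M)).2 this
    linarith
  have hlow : (n.choose (k + 1) : ℝ) * (pm * y ^ Nhi) ≤ ∑ K ∈ KK, μ.real (A K) := by
    rw [← hKKc, ← nsmul_eq_mul]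
    refine Finset.card_nsmul_le_sum _ _ _ fun K hK => ?_
    rw [hAr K hK]
    have hc := (hKK K).1 hK
    refine mul_le_mul_of_nonneg_left ?_ hpm.le
    exact pow_le_pow_of_le_one hy0.le hy1 (dang_upper hjk hc (hcen K hc).2 (hcen K hc).1)
  have hlow0 : 0 < (n.choose (k + 1) : ℝ) * (pm * y ^ Nhi) := by
    have : 0 < n.choose (k + 1) := Nat.choose_pos hn
    positivity
  have hZ := second_moment μ KK A hAm ((y ^ M)⁻¹ - 1) hAA hε _ rfl (hlow0.trans_le hlow)
  have hZ2 : μ.real {t | ∀ K ∈ KK, t ∉ A K} ≤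
      1 / ((n.choose (k + 1) : ℝ) * (pm * y ^ Nhi)) + ((y ^ M)⁻¹ - 1) := by
    refine hZ.trans ?_
    have := one_div_le_one_div_of_le hlow0 hlow
    linarith
  refine (measureReal_mono hsub (measure_ne_top μ _)).trans ((measureReal_union_le _ _).trans ?_)
  refine add_le_add ?_ hZ2
  refine (measureReal_biUnion_finset_le _ _).trans ?_
  have : ((n.choose (k + 1) : ℝ) * ((k + 1).choose j : ℝ)) = (PP.card : ℝ) := by
    rw [hPPc]; push_cast; ring
  rw [this, ← nsmul_eq_mul]
  refine Finset.sum_le_card_nsmul _ _ _ fun x hx => ?_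
  exact (measureReal_union_le _ _).trans (add_le_add (hB1 x hx) (hB2 x hx))

lemma choose_lower_bound (n m r : ℕ) (hn : m + r ≤ n) (hn0 : 0 < n) :
    (n : ℝ) ^ r * (1 - ((m + r : ℕ) : ℝ) * r / n) ≤ (r.factorial : ℝ) * ((n - m).choose r : ℝ) := by
  have h1 := Nat.pow_sub_le_descFactorial (n - m) r
  rw [Nat.descFactorial_eq_factorial_mul_choose] at h1
  have h2 : (((n - m + 1 - r : ℕ) : ℝ)) ^ r ≤ (r.factorial : ℝ) * ((n - m).choose r : ℝ) := by
    exact_mod_cast h1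
  refine le_trans ?_ h2
  have hnR : (0 : ℝ) < n := by exact_mod_cast hn0
  have h3 : (n : ℝ) - ((m + r : ℕ) : ℝ) ≤ ((n - m + 1 - r : ℕ) : ℝ) := by
    rw [← Nat.cast_sub hn]
    exact_mod_cast (by omega : n - (m + r) ≤ n - m + 1 - r)
  have h4 : (0 : ℝ) ≤ (n : ℝ) - ((m + r : ℕ) : ℝ) := by
    rw [← Nat.cast_sub hn]; positivity
  refine le_trans ?_ (pow_le_pow_left₀ h4 h3 r)
  have h5 : (n : ℝ) - ((m + r : ℕ) : ℝ) = n * (1 + -(((m + r : ℕ) : ℝ) / n)) := by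
    field_simp; ring
  rw [h5, mul_pow]
  refine mul_le_mul_of_nonneg_left ?_ (by positivity)
  have h6 : ((m + r : ℕ) : ℝ) / n ≤ 1 := by
    rw [div_le_one hnR]; linarith
  have := one_add_mul_le_pow (a := -(((m + r : ℕ) : ℝ) / n)) (by linarith) r
  refine le_trans (le_of_eq ?_) this
  ring

lemma exp_le_one_sub {p : ℝ} (h0 : 0 ≤ p) (h1 : p ≤ 1 / 2) :
    Real.exp (-(p + 2 * p ^ 2)) ≤ 1 - p := by
  have hpos : 0 < 1 - p := by linarith
  rw [← Real.le_log_iff_exp_le hpos]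
  refine le_trans ?_ (Real.one_sub_inv_le_log_of_pos hpos)
  have : (1 - p)⁻¹ ≤ 1 + p + 2 * p ^ 2 := by
    rw [inv_le_iff_one_le_mul₀ hpos]
    nlinarith [mul_nonneg h0 h0, mul_nonneg (mul_nonneg h0 h0) (by linarith : 0 ≤ 1/2 - p)]
  linarith

set_option maxHeartbeats 4000000 in
lemma analytic_bound (j r n : ℕ) (hr : 1 ≤ r) (L u T c pp pm : ℝ) (hn : 0 < n)
    (hL : L = Real.log n) (hu : u = Real.log L) (hL0 : 0 < L) (hu2 : 2 ≤ u)
    (hc : c = (r.factorial : ℝ) / ((r + 1 : ℕ) : ℝ))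
    (hT : T = (j + 1) * L + 3 / 4 * u)
    (hpp : pp = T * c / (n : ℝ) ^ r)
    (hpm : pm = (1 - 1 / Real.sqrt L) * ((j + 1) * L) * c / (n : ℝ) ^ r)
    (hκ : (2 * ((j + r + 1 + r : ℕ) : ℝ) * r + 2 * ((j + r + 1 : ℕ) : ℝ) ^ 2 + 2 * c) * T ^ 2 ≤ n) :
    (j + r + 1 ≤ n ∧ 0 < pm ∧ pm ≤ pp ∧ pp < 1) ∧
    ((n.choose (j + r + 1) : ℝ) * ((j + r + 1).choose j : ℝ)) *
        ((pp - pm) * (1 - pp) ^ ((r + 1) * Nat.choose (n - (j + r + 1)) r)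
          + (1 - pp) ^ ((r + 1) * Nat.choose (n - (j + r + 1)) r)
            / ((((r + 1) * Nat.choose (n - (j + r + 1)) r : ℕ) : ℝ) + 1))
      + (1 / ((n.choose (j + r + 1) : ℝ) *
          (pm * (1 - pp) ^ ((r + 1) * Nat.choose (n - (j + 1)) r)))
        + (((1 - pp) ^ ((r + 1) ^ 2 * n ^ (r - 1)))⁻¹ - 1))
    ≤ ((j + r + 1).choose j * c * Real.exp 1 * (j + 3)) * Real.exp (-(u / 4))
      + ((j + r + 1).choose j * c * Real.exp 1 * 2) * Real.exp (-(3 / 4 * u))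
      + (4 * ((j + r + 1).factorial : ℝ) * Real.exp 1 / c) * Real.exp (-(u / 4))
      + (Real.exp ((4 * c * ((r : ℝ) + 1) ^ 2) * (T / n)) - 1) := by
  have hnR : (0 : ℝ) < n := by exact_mod_cast hn
  have hn1 : (1 : ℝ) ≤ n := by exact_mod_cast hn
  have hc0 : 0 < c := by rw [hc]; positivity
  have hLu : L = Real.exp u := by rw [hu, Real.exp_log hL0]
  have hL3 : u + 1 ≤ L := by rw [hLu]; exact Real.add_one_le_exp u
  have hjL : 0 ≤ (j : ℝ) * L := by positivity
  have hT1 : 1 ≤ T := by rw [hT]; nlinarith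
  have hT0 : 0 < T := by linarith
  have hTT : T ≤ T ^ 2 := by nlinarith
  have hw : (0 : ℝ) < (n : ℝ) ^ r := by positivity
  have hwn : (n : ℝ) ≤ (n : ℝ) ^ r := le_self_pow₀ hn1 (by omega)
  -- sqrt
  have hsq : Real.sqrt L = Real.exp (u / 2) := by
    rw [hLu, Real.exp_half]
  have hsq2 : 2 ≤ Real.sqrt L := by
    rw [hsq]; linarith [Real.add_one_le_exp (u / 2)]
  have hsqsq : Real.sqrt L * Real.sqrt L = L := Real.mul_self_sqrt hL0.le
  have husq : u ≤ 2 * Real.sqrt L := by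
    rw [hsq]; linarith [Real.add_one_le_exp (u / 2)]
  -- consequences of the size condition
  have t1 : 0 ≤ ((j + r + 1 + r : ℕ) : ℝ) * r * T ^ 2 := by positivity
  have t2 : 0 ≤ ((j + r + 1 : ℕ) : ℝ) ^ 2 * T ^ 2 := by positivity
  have t3 : 0 ≤ c * T ^ 2 := by positivity
  have k1 : 2 * (((j + r + 1 + r : ℕ) : ℝ) * r * T ^ 2) ≤ n := by linarith
  have k2 : 2 * (((j + r + 1 : ℕ) : ℝ) ^ 2 * T ^ 2) ≤ n := by linarith
  have k3 : 2 * (c * T ^ 2) ≤ n := by linarith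
  have hr1 : (1 : ℝ) ≤ r := by exact_mod_cast hr
  have k1T : 2 * (((j + r + 1 + r : ℕ) : ℝ) * r * T) ≤ n := by
    refine le_trans ?_ k1
    gcongr
  have k10 : 2 * (((j + r + 1 + r : ℕ) : ℝ) * r) ≤ n := by
    refine le_trans ?_ k1T
    have : 0 ≤ ((j + r + 1 + r : ℕ) : ℝ) * r := by positivity
    linarith [le_mul_of_one_le_right this hT1]
  have k11 : j + r + 1 + r ≤ n := by
    have : ((j + r + 1 + r : ℕ) : ℝ) ≤ n := by
      have h0 : 0 ≤ ((j + r + 1 + r : ℕ) : ℝ) := by positivity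
      linarith [le_mul_of_one_le_right h0 hr1]
    exact_mod_cast this
  have k20 : 2 * (((j + r + 1 : ℕ) : ℝ) * ((j + r + 1 : ℕ) : ℝ)) ≤ n := by
    refine le_trans ?_ k2
    have : 0 ≤ ((j + r + 1 : ℕ) : ℝ) ^ 2 := by positivity
    linarith [le_mul_of_one_le_right this (hT1.trans hTT)]
  have hppw : pp * (n : ℝ) ^ r = T * c := by rw [hpp]; field_simp
  have hpp0 : 0 < pp := by rw [hpp]; positivity
  have hppT : 2 * (T * pp) ≤ 1 := by
    rw [hpp]
    have : 2 * (T * (T * c / (n : ℝ) ^ r)) = 2 * (c * T ^ 2) / (n : ℝ) ^ r := by ring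
    rw [this, div_le_one hw]; linarith
  have hpph : pp ≤ 1 / 2 := by linarith [le_mul_of_one_le_left hpp0.le hT1]
  have hy0 : 0 < 1 - pp := by linarith
  have hs1 : 1 / Real.sqrt L ≤ 1 / 2 := one_div_le_one_div_of_le (by norm_num) hsq2
  have hs0 : 0 < 1 / Real.sqrt L := by positivity
  have hpmlow : (1 / 2) * L * c / (n : ℝ) ^ r ≤ pm := by
    rw [hpm]
    gcongr ?_ * c / _
    have g1 : 1 / 2 ≤ 1 - 1 / Real.sqrt L := by linarith
    have g2 : L ≤ (j + 1) * L := by linarith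
    exact mul_le_mul g1 g2 hL0.le (by linarith)
  have hpm0 : 0 < pm := lt_of_lt_of_le (by positivity) hpmlow
  have hdiff : pp - pm = ((j + 1) * Real.sqrt L + 3 / 4 * u) * c / (n : ℝ) ^ r := by
    have : L / Real.sqrt L = Real.sqrt L := Real.div_sqrt
    rw [hpp, hpm, hT]
    have e : (1 - 1 / Real.sqrt L) * ((j + 1) * L) = (j + 1) * L - (j + 1) * (L / Real.sqrt L) := by
      ring
    rw [e, this]; ring
  have hdiff0 : 0 ≤ pp - pm := by rw [hdiff]; positivity
  have hdiffle : pp - pm ≤ (j + 3) * Real.exp (u / 2) * c / (n : ℝ) ^ r := by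
    rw [hdiff, ← hsq]
    gcongr ?_ * c / _
    linarith
  refine ⟨⟨by omega, hpm0, by linarith, by linarith⟩, ?_⟩
  -- factorial facts
  have hrf : (0 : ℝ) < (r.factorial : ℝ) := by exact_mod_cast r.factorial_pos
  have hcr : c * ((r : ℝ) + 1) = r.factorial := by rw [hc]; push_cast; field_simp
  -- exp T
  have hexpT : Real.exp T = (n : ℝ) ^ (j + 1) * Real.exp (3 / 4 * u) := by
    rw [hT, Real.exp_add]
    congr 1
    have : ((j : ℝ) + 1) * L = ((j + 1 : ℕ) : ℝ) * L := by push_cast; ring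
    rw [this, Real.exp_nat_mul, hL, Real.exp_log hnR]
  set Nlo := (r + 1) * Nat.choose (n - (j + r + 1)) r with hNlo
  set Nhi := (r + 1) * Nat.choose (n - (j + 1)) r with hNhi
  -- lower bound for Nlo
  have hlo : (n : ℝ) ^ r * (1 - ((j + r + 1 + r : ℕ) : ℝ) * r / n) ≤ c * Nlo := by
    have := choose_lower_bound n (j + r + 1) r k11 hn
    refine this.trans (le_of_eq ?_)
    rw [hNlo, ← hcr]; push_cast; ring
  have hloT : T - 1 ≤ pp * Nlo := by
    have h1 : pp * ((n : ℝ) ^ r * (1 - ((j + r + 1 + r : ℕ) : ℝ) * r / n)) ≤ pp * (c * Nlo) := by gcongr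
    have h2 : pp * ((n : ℝ) ^ r * (1 - ((j + r + 1 + r : ℕ) : ℝ) * r / n))
        = c * (T - ((j + r + 1 + r : ℕ) : ℝ) * r * T / n) := by
      rw [← mul_assoc, hppw]; ring
    have h3 : ((j + r + 1 + r : ℕ) : ℝ) * r * T / n ≤ 1 := by
      rw [div_le_one hnR]
      have : 0 ≤ ((j + r + 1 + r : ℕ) : ℝ) * r * T := by positivity
      linarith
    have h4 : c * (T - 1) ≤ c * (pp * Nlo) := by
      calc c * (T - 1) ≤ c * (T - ((j + r + 1 + r : ℕ) : ℝ) * r * T / n) := by gcongr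
        _ ≤ pp * (c * Nlo) := by rw [← h2]; exact h1
        _ = c * (pp * Nlo) := by ring
    exact le_of_mul_le_mul_left h4 hc0
  have hlohalf : (n : ℝ) ^ r / (2 * c) ≤ (Nlo : ℝ) + 1 := by
    have h3 : ((j + r + 1 + r : ℕ) : ℝ) * r / n ≤ 1 / 2 := by
      rw [div_le_iff₀ hnR]; linarith
    have : (n : ℝ) ^ r * (1 / 2) ≤ c * Nlo := le_trans (by gcongr; linarith) hlo
    rw [div_le_iff₀ (by positivity)]
    linarith
  have hyNlo : (1 - pp) ^ Nlo ≤ Real.exp 1 * (Real.exp (-(3 / 4 * u)) / (n : ℝ) ^ (j + 1)) := by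
    have h1 : (1 - pp) ^ Nlo ≤ Real.exp (-pp) ^ Nlo :=
      pow_le_pow_left₀ hy0.le (Real.one_sub_le_exp_neg pp) _
    have h2 : Real.exp (-pp) ^ Nlo ≤ Real.exp (1 - T) := by
      rw [← Real.exp_nat_mul]
      apply Real.exp_le_exp.2
      linarith
    refine (h1.trans h2).trans (le_of_eq ?_)
    rw [Real.exp_sub, hexpT, Real.exp_neg]
    field_simp
  -- number of simplices
  have hchle : (n.choose (j + r + 1) : ℝ) ≤ (n : ℝ) ^ (j + r + 1) := by
    exact_mod_cast Nat.choose_le_pow n (j + r + 1)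
  have hnpow : (n : ℝ) ^ (j + r + 1) = (n : ℝ) ^ (j + 1) * (n : ℝ) ^ r := by
    rw [← pow_add]; congr 1; omega
  have hv : (0 : ℝ) < (n : ℝ) ^ (j + 1) := by positivity
  have term1 : (n.choose (j + r + 1) : ℝ) * ((pp - pm) * (1 - pp) ^ Nlo) ≤
      c * Real.exp 1 * (j + 3) * Real.exp (-(u / 4)) := by
    calc (n.choose (j + r + 1) : ℝ) * ((pp - pm) * (1 - pp) ^ Nlo)
        ≤ ((n : ℝ) ^ (j + 1) * (n : ℝ) ^ r) * (((j + 3) * Real.exp (u / 2) * c / (n : ℝ) ^ r) *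
          (Real.exp 1 * (Real.exp (-(3 / 4 * u)) / (n : ℝ) ^ (j + 1)))) := by
          rw [← hnpow]; gcongr
      _ = c * Real.exp 1 * (j + 3) * (Real.exp (u / 2) * Real.exp (-(3 / 4 * u))) := by
          field_simp
      _ = c * Real.exp 1 * (j + 3) * Real.exp (-(u / 4)) := by
          rw [← Real.exp_add]; congr 2; ring
  have term2 : (n.choose (j + r + 1) : ℝ) * ((1 - pp) ^ Nlo / ((Nlo : ℝ) + 1)) ≤
      c * Real.exp 1 * 2 * Real.exp (-(3 / 4 * u)) := by
    calc (n.choose (j + r + 1) : ℝ) * ((1 - pp) ^ Nlo / ((Nlo : ℝ) + 1))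
        ≤ ((n : ℝ) ^ (j + 1) * (n : ℝ) ^ r) *
          ((Real.exp 1 * (Real.exp (-(3 / 4 * u)) / (n : ℝ) ^ (j + 1))) / ((n : ℝ) ^ r / (2 * c))) := by
          rw [← hnpow]; gcongr
      _ = c * Real.exp 1 * 2 * Real.exp (-(3 / 4 * u)) := by
          field_simp
  -- second moment terms
  have hchlow : (n : ℝ) ^ (j + r + 1) / (2 * ((j + r + 1).factorial : ℝ)) ≤ (n.choose (j + r + 1) : ℝ) := by
    have h1 := choose_lower_bound n 0 (j + r + 1) (by omega) hn
    rw [Nat.sub_zero, Nat.zero_add] at h1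
    have h3 : ((j + r + 1 : ℕ) : ℝ) * ((j + r + 1 : ℕ) : ℝ) / n ≤ 1 / 2 := by
      rw [div_le_iff₀ hnR]; linarith
    have h4 : (n : ℝ) ^ (j + r + 1) * (1 / 2) ≤ ((j + r + 1).factorial : ℝ) * (n.choose (j + r + 1) : ℝ) :=
      le_trans (by gcongr; linarith) h1
    have : (0 : ℝ) < ((j + r + 1).factorial : ℝ) := by exact_mod_cast Nat.factorial_pos _
    rw [div_le_iff₀ (by positivity)]
    linarith
  have hhi : c * (Nhi : ℝ) ≤ (n : ℝ) ^ r := by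
    have h1 : ((n - (j + 1)).choose r : ℝ) ≤ ((n - (j + 1) : ℕ) : ℝ) ^ r / r.factorial :=
      Nat.choose_le_pow_div r (n - (j + 1))
    have h2 : ((n - (j + 1) : ℕ) : ℝ) ^ r ≤ (n : ℝ) ^ r := by
      gcongr
      exact Nat.sub_le _ _
    rw [le_div_iff₀ hrf] at h1
    have h3 : c * (Nhi : ℝ) = ((n - (j + 1)).choose r : ℝ) * r.factorial := by
      rw [hNhi, ← hcr]; push_cast; ring
    rw [h3]; linarith
  have hppNhi : pp * Nhi ≤ T := by
    have : c * (pp * Nhi) ≤ c * T := by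
      calc c * (pp * Nhi) = pp * (c * Nhi) := by ring
        _ ≤ pp * (n : ℝ) ^ r := by gcongr
        _ = c * T := by rw [hppw]; ring
    exact le_of_mul_le_mul_left this hc0
  have hyNhi : Real.exp (-(3 / 4 * u)) / (n : ℝ) ^ (j + 1) / Real.exp 1 ≤ (1 - pp) ^ Nhi := by
    have h1 : Real.exp (-(pp + 2 * pp ^ 2)) ^ Nhi ≤ (1 - pp) ^ Nhi :=
      pow_le_pow_left₀ (Real.exp_pos _).le (exp_le_one_sub hpp0.le hpph) _
    refine le_trans ?_ h1
    rw [← Real.exp_nat_mul]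
    have h2 : Real.exp (-(3 / 4 * u)) / (n : ℝ) ^ (j + 1) / Real.exp 1 = Real.exp (-T - 1) := by
      rw [Real.exp_sub, Real.exp_neg T, hexpT, Real.exp_neg]
      field_simp
    rw [h2]
    apply Real.exp_le_exp.2
    have h5 : pp * (pp * Nhi) ≤ pp * T := by gcongr
    linarith
  have term3 : 1 / ((n.choose (j + r + 1) : ℝ) * (pm * (1 - pp) ^ Nhi)) ≤
      (4 * ((j + r + 1).factorial : ℝ) * Real.exp 1 / c) * Real.exp (-(u / 4)) := by
    have hf : (0 : ℝ) < ((j + r + 1).factorial : ℝ) := by exact_mod_cast Nat.factorial_pos _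
    have hlow : ((n : ℝ) ^ (j + 1) * (n : ℝ) ^ r / (2 * ((j + r + 1).factorial : ℝ))) *
        (((1 / 2) * L * c / (n : ℝ) ^ r) *
          (Real.exp (-(3 / 4 * u)) / (n : ℝ) ^ (j + 1) / Real.exp 1)) ≤
        (n.choose (j + r + 1) : ℝ) * (pm * (1 - pp) ^ Nhi) := by
      rw [← hnpow]; gcongr
    refine (one_div_le_one_div_of_le (by positivity) hlow).trans (le_of_eq ?_)
    rw [hLu]
    have e1 : Real.exp u * Real.exp (-(3 / 4 * u)) = (Real.exp (-(u / 4)))⁻¹ := by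
      rw [← Real.exp_add, ← Real.exp_neg]; congr 1; ring
    have e2 : ((n : ℝ) ^ (j + 1) * (n : ℝ) ^ r / (2 * ((j + r + 1).factorial : ℝ))) *
        (((1 / 2) * Real.exp u * c / (n : ℝ) ^ r) *
          (Real.exp (-(3 / 4 * u)) / (n : ℝ) ^ (j + 1) / Real.exp 1))
        = (Real.exp u * Real.exp (-(3 / 4 * u))) * (c / (4 * ((j + r + 1).factorial : ℝ) * Real.exp 1)) := by
      field_simp; ring
    rw [e2, e1]
    field_simp
  have term4 : ((1 - pp) ^ ((r + 1) ^ 2 * n ^ (r - 1)))⁻¹ ≤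
      Real.exp ((4 * c * ((r : ℝ) + 1) ^ 2) * (T / n)) := by
    have h1 : Real.exp (-(2 * pp)) ≤ 1 - pp := by
      refine le_trans (Real.exp_le_exp.2 ?_) (exp_le_one_sub hpp0.le hpph)
      have : pp * pp ≤ 1 / 2 * pp := by gcongr
      linarith
    have h2 : Real.exp (-(2 * pp)) ^ ((r + 1) ^ 2 * n ^ (r - 1)) ≤ (1 - pp) ^ ((r + 1) ^ 2 * n ^ (r - 1)) :=
      pow_le_pow_left₀ (Real.exp_pos _).le h1 _
    refine (inv_anti₀ (by positivity) h2).trans ?_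
    rw [← Real.exp_nat_mul, ← Real.exp_neg]
    apply Real.exp_le_exp.2
    have hnr : (n : ℝ) ^ r = n * (n : ℝ) ^ (r - 1) := by
      rw [← pow_succ']; congr 1; omega
    have e : pp * (n : ℝ) ^ (r - 1) = c * (T / n) := by
      rw [hpp, hnr]; field_simp
    push_cast
    have e2 : -(((r : ℝ) + 1) ^ 2 * (n : ℝ) ^ (r - 1) * -(2 * pp))
        = 2 * ((r : ℝ) + 1) ^ 2 * (pp * (n : ℝ) ^ (r - 1)) := by ring
    rw [e2, e]
    have : 0 ≤ ((r : ℝ) + 1) ^ 2 * (c * (T / n)) := by positivity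
    linarith
  have hcb : (0 : ℝ) ≤ ((j + r + 1).choose j : ℝ) := by positivity
  have s1 := mul_le_mul_of_nonneg_left term1 hcb
  have s2 := mul_le_mul_of_nonneg_left term2 hcb
  have e : ((n.choose (j + r + 1) : ℝ) * ((j + r + 1).choose j : ℝ)) *
        ((pp - pm) * (1 - pp) ^ Nlo + (1 - pp) ^ Nlo / ((Nlo : ℝ) + 1))
      = ((j + r + 1).choose j : ℝ) * ((n.choose (j + r + 1) : ℝ) * ((pp - pm) * (1 - pp) ^ Nlo))
        + ((j + r + 1).choose j : ℝ) * ((n.choose (j + r + 1) : ℝ) * ((1 - pp) ^ Nlo / ((Nlo : ℝ) + 1))) := by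
    ring
  rw [e]
  linarith

lemma tendsto_good (k j : ℕ) (hk : 2 ≤ k) (hj : 1 ≤ j) (hjk : j < k) :
    Tendsto (fun n : ℕ => (birthMeasure n).real {t : Finset (Fin n) → ℝ |
      ∃ K C : Finset (Fin n),
        ∀ p : ℝ, pjMinus k j n ≤ p → p < pMj k j n t →
          IsMjMinus (complexAt k n t p) k j K C}ᶜ) atTop (nhds 0) := by
  obtain ⟨r, rfl⟩ : ∃ r, k = j + r := ⟨k - j, by omega⟩
  have hr : 1 ≤ r := by omega
  have hsub : j + r - j = r := by omega
  let c : ℝ := (r.factorial : ℝ) / ((r + 1 : ℕ) : ℝ)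
  let L : ℕ → ℝ := fun n => Real.log n
  let u : ℕ → ℝ := fun n => Real.log (L n)
  let T : ℕ → ℝ := fun n => (j + 1) * L n + 3 / 4 * u n
  have hLt : Tendsto L atTop atTop := Real.tendsto_log_atTop.comp tendsto_natCast_atTop_atTop
  have hut : Tendsto u atTop atTop := Real.tendsto_log_atTop.comp hLt
  have hTn2 : Tendsto (fun n : ℕ => L n ^ 2 / n) atTop (nhds 0) :=
    ((Real.isLittleO_pow_log_id_atTop (n := 2)).tendsto_div_nhds_zero).comp
      tendsto_natCast_atTop_atTop
  have hTn1 : Tendsto (fun n : ℕ => L n ^ 1 / n) atTop (nhds 0) :=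
    ((Real.isLittleO_pow_log_id_atTop (n := 1)).tendsto_div_nhds_zero).comp
      tendsto_natCast_atTop_atTop
  have evL : ∀ᶠ n in atTop, 0 < L n := hLt.eventually_gt_atTop 0
  have evu : ∀ᶠ n in atTop, 2 ≤ u n := hut.eventually_ge_atTop 2
  have evT : ∀ᶠ n in atTop, 0 ≤ T n ∧ T n ≤ (j + 2) * L n := by
    filter_upwards [evL, evu] with n h1 h2
    have h3 : u n ≤ L n - 1 := Real.log_le_sub_one_of_pos h1
    have h4 : 0 ≤ (j : ℝ) * L n := by positivity
    simp only [T]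
    constructor <;> linarith
  have hTn : Tendsto (fun n : ℕ => T n / n) atTop (nhds 0) := by
    have h : Tendsto (fun n : ℕ => ((j : ℝ) + 2) * (L n ^ 1 / n)) atTop (nhds 0) := by
      simpa using hTn1.const_mul ((j : ℝ) + 2)
    refine squeeze_zero' ?_ ?_ h
    · filter_upwards [evT] with n h
      have := h.1
      positivity
    · filter_upwards [evT] with n h
      rw [pow_one, ← mul_div_assoc]
      exact div_le_div_of_nonneg_right h.2 (by positivity)
  let κ : ℝ := 2 * ((j + r + 1 + r : ℕ) : ℝ) * r + 2 * ((j + r + 1 : ℕ) : ℝ) ^ 2 + 2 * c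
  have hκ0 : 0 ≤ κ := by positivity
  have evκ : ∀ᶠ n : ℕ in atTop, κ * T n ^ 2 ≤ n := by
    have h : Tendsto (fun n : ℕ => (κ * ((j : ℝ) + 2) ^ 2) * (L n ^ 2 / n)) atTop (nhds 0) := by
      simpa using hTn2.const_mul (κ * ((j : ℝ) + 2) ^ 2)
    filter_upwards [evT, h.eventually_le_const (zero_lt_one), eventually_gt_atTop 0] with n h1 h2 h3
    have hnR : (0 : ℝ) < n := by exact_mod_cast h3
    rw [← mul_div_assoc, div_le_one hnR] at h2
    refine le_trans ?_ h2
    have : T n ^ 2 ≤ ((j + 2) * L n) ^ 2 := pow_le_pow_left₀ h1.1 h1.2 2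
    calc κ * T n ^ 2 ≤ κ * ((j + 2) * L n) ^ 2 := by gcongr
      _ = _ := by ring
  have hg : Tendsto (fun n : ℕ =>
      ((j + r + 1).choose j * c * Real.exp 1 * (j + 3)) * Real.exp (-(u n / 4))
      + ((j + r + 1).choose j * c * Real.exp 1 * 2) * Real.exp (-(3 / 4 * u n))
      + (4 * ((j + r + 1).factorial : ℝ) * Real.exp 1 / c) * Real.exp (-(u n / 4))
      + (Real.exp ((4 * c * ((r : ℝ) + 1) ^ 2) * (T n / n)) - 1)) atTop (nhds 0) := by
    have e1 : Tendsto (fun n => Real.exp (-(u n / 4))) atTop (nhds 0) :=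
      Real.tendsto_exp_neg_atTop_nhds_zero.comp (hut.atTop_div_const (by norm_num))
    have e2 : Tendsto (fun n => Real.exp (-(3 / 4 * u n))) atTop (nhds 0) :=
      Real.tendsto_exp_neg_atTop_nhds_zero.comp (hut.const_mul_atTop (by norm_num))
    have e3 : Tendsto (fun n : ℕ => Real.exp ((4 * c * ((r : ℝ) + 1) ^ 2) * (T n / n))) atTop
        (nhds (Real.exp ((4 * c * ((r : ℝ) + 1) ^ 2) * 0))) :=
      (Real.continuous_exp.tendsto _).comp (hTn.const_mul _)
    have := (((e1.const_mul ((j + r + 1).choose j * c * Real.exp 1 * (j + 3))).add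
      (e2.const_mul ((j + r + 1).choose j * c * Real.exp 1 * 2))).add
      (e1.const_mul (4 * ((j + r + 1).factorial : ℝ) * Real.exp 1 / c))).add (e3.sub_const 1)
    simpa using this
  refine squeeze_zero' (Eventually.of_forall fun n => measureReal_nonneg) ?_ hg
  filter_upwards [evL, evu, evκ, eventually_gt_atTop 0] with n h1 h2 h3 h4
  have hpmeq : pjMinus (j + r) j n
      = (1 - 1 / Real.sqrt (L n)) * ((j + 1) * L n) * c / (n : ℝ) ^ r := by
    have : (0 : ℝ) < n := by exact_mod_cast h4
    simp only [pjMinus, hsub, c, L]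
    field_simp
  obtain ⟨⟨a1, a2, a3, a4⟩, a5⟩ := analytic_bound j r n hr (L n) (u n) (T n) c _ _ h4 rfl rfl h1 h2
    rfl rfl rfl hpmeq h3
  have := prob_bound hk hj hjk a1 _ _ a2 a3 a4
  rw [hsub] at this
  exact this.trans a5

/-- Lemma 4.10: whp one copy of `M_j^-` exists in `G_p` throughout `[p_j^-, p_{M_j})`. -/
theorem statement15 (k j : ℕ) (hk : 2 ≤ k) (hj : 1 ≤ j) (hjk : j < k) :
    Tendsto (fun n : ℕ => birthMeasure n {t : Finset (Fin n) → ℝ |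
      ∃ K C : Finset (Fin n),
        ∀ p : ℝ, pjMinus k j n ≤ p → p < pMj k j n t →
          IsMjMinus (complexAt k n t p) k j K C})
      atTop (nhds 1) := by
  have h := ENNReal.tendsto_ofReal (tendsto_good k j hk hj hjk)
  have h2 := ENNReal.Tendsto.sub (tendsto_const_nhds (x := (1 : ENNReal)) (f := atTop)) h
    (Or.inl ENNReal.one_ne_top)
  rw [ENNReal.ofReal_zero, tsub_zero] at h2
  refine tendsto_of_tendsto_of_tendsto_of_le_of_le h2 tendsto_const_nhds (fun n => ?_)
    (fun n => prob_le_one)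
  simp only
  rw [ofReal_measureReal (measure_ne_top _ _), tsub_le_iff_right]
  have := measure_univ_le_add_compl (μ := birthMeasure n) {t : Finset (Fin n) → ℝ |
      ∃ K C : Finset (Fin n),
        ∀ p : ℝ, pjMinus k j n ≤ p → p < pMj k j n t →
          IsMjMinus (complexAt k n t p) k j K C}
  rwa [measure_univ] at this

end RSC
end

section
/- Let k ≥ 2 and j ∈ {1,…,k−1}, and let G be a k-dimensional simplicial complex in which every simplex is contained in a k-simplex. Suppose f is an element of N_G whose support has minimum cardinality among the supports of all elements of N_G. Then the support of f is traversable. -/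
open MeasureTheory Filter

attribute [local instance] Classical.propDecidable

namespace RSC

variable {V : Type*}

/-- Sums of generated cochains are generated. -/
theorem generated_add [DecidableEq V] {G : Set (Finset V)} {k j : ℕ} {f g : Cochain G j}
    (hf : GeneratedByMjMinus G k j f) (hg : GeneratedByMjMinus G k j g) :
    GeneratedByMjMinus G k j (f + g) := by
  obtain ⟨m, fs, h1, h2⟩ := hf
  obtain ⟨n, gs, h3, h4⟩ := hg
  refine ⟨m + n, Fin.append fs gs, ?_, ?_⟩
  · intro i
    refine Fin.addCases (fun i => ?_) (fun i => ?_) i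
    · simpa using h1 i
    · simpa using h3 i
  · rw [Fin.sum_univ_add]
    simp only [Fin.append_left, Fin.append_right]
    rw [add_sub_add_comm]
    exact Submodule.add_mem _ h2 h4

/-- Restricting a cocycle to a set which, within each `k`-simplex, meets the support in
everything or in nothing, yields a cocycle. -/
theorem restrict_cocycle {G : Set (Finset V)} {k j : ℕ}
    (hcov : ∀ A ∈ G, ∃ K, IsSimplex G k K ∧ A ⊆ K)
    (f : Cochain G j) (hf : f ∈ cocycles G j) (T : Set (Finset V))
    (hT : ∀ K, IsSimplex G k K → ∀ a ∈ cochainSupport f, ∀ b ∈ cochainSupport f,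
      a ⊆ K → b ⊆ K → a ∈ T → b ∈ T) :
    (fun σ => if (σ : Finset V) ∈ T then f σ else 0 : Cochain G j) ∈ cocycles G j := by
  have key : ∀ x : ZMod 2, x ≠ 1 → x = 0 := by decide
  have hf0 : coboundary G j f = 0 := hf
  change coboundary G j _ = 0
  funext A
  obtain ⟨K, hK, hAK⟩ := hcov A A.2.1
  have hfA := congrFun hf0 A
  simp only [coboundary, LinearMap.coe_mk, AddHom.coe_mk, Pi.zero_apply] at hfA ⊢
  by_cases hex : ∃ a ∈ cochainSupport f, a ⊆ (A : Finset V) ∧ a ∈ T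
  · obtain ⟨a, ha, haA, haT⟩ := hex
    refine Eq.trans ?_ hfA
    refine Finset.sum_congr rfl fun τ hτ => ?_
    by_cases h : IsSimplex G j τ
    · simp only [h, dite_true]
      by_cases h1 : f ⟨τ, h⟩ = 1
      · have : τ ∈ T := hT K hK a ha τ ⟨h, h1⟩ (haA.trans hAK)
          ((Finset.mem_powersetCard.1 hτ).1.trans hAK) haT
        simp [this]
      · simp [key _ h1]
    · simp [h]
  · refine Finset.sum_eq_zero fun τ hτ => ?_
    by_cases h : IsSimplex G j τ
    · simp only [h, dite_true]
      by_cases h1 : f ⟨τ, h⟩ = 1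
      · have : τ ∉ T := fun ht => hex ⟨τ, ⟨h, h1⟩, (Finset.mem_powersetCard.1 hτ).1, ht⟩
        simp [this]
      · simp [key _ h1]
    · simp [h]

/-- Lemma 5.3: in a `k`-complex in which every simplex lies in a `k`-simplex, the support
of a minimum-support element of `N_G` is traversable. -/
theorem statement16 {V : Type*} [Fintype V] [DecidableEq V] (k j : ℕ) (hk : 2 ≤ k)
    (hj : 1 ≤ j) (hjk : j < k) (G : Set (Finset V)) (hG : IsKComplex G k)
    (hcov : ∀ A ∈ G, ∃ K, IsSimplex G k K ∧ A ⊆ K)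
    (f : Cochain G j) (hf : InNG G k j f)
    (hmin : ∀ g : Cochain G j, InNG G k j g →
      (cochainSupport f).ncard ≤ (cochainSupport g).ncard) :
    Traversable G k (cochainSupport f) := by
  by_contra hne
  unfold Traversable at hne
  push Not at hne
  obtain ⟨σ₁, h₁, σ₂, h₂, hn⟩ := hne
  set S := cochainSupport f with hS
  let R : Finset V → Finset V → Prop :=
    fun a b => a ∈ S ∧ b ∈ S ∧ ∃ K, IsSimplex G k K ∧ a ⊆ K ∧ b ⊆ K
  let T : Set (Finset V) := {τ | Relation.TransGen R σ₁ τ}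
  have hT₁ : σ₁ ∈ T := by
    obtain ⟨h, -⟩ := id h₁
    obtain ⟨K, hK, hs⟩ := hcov σ₁ h.1
    exact Relation.TransGen.single ⟨h₁, h₁, K, hK, hs, hs⟩
  have hT₂ : σ₂ ∉ T := hn
  have hTcl : ∀ K, IsSimplex G k K → ∀ a ∈ cochainSupport f, ∀ b ∈ cochainSupport f,
      a ⊆ K → b ⊆ K → a ∈ T → b ∈ T := fun K hK a ha b hb haK hbK haT =>
    Relation.TransGen.tail haT ⟨ha, hb, K, hK, haK, hbK⟩
  have hTcl' : ∀ K, IsSimplex G k K → ∀ a ∈ cochainSupport f, ∀ b ∈ cochainSupport f,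
      a ⊆ K → b ⊆ K → a ∈ Tᶜ → b ∈ Tᶜ := fun K hK a ha b hb haK hbK haT hbT =>
    haT (hTcl K hK b hb a ha hbK haK hbT)
  have main : ∀ U : Set (Finset V), (∀ K, IsSimplex G k K → ∀ a ∈ cochainSupport f,
      ∀ b ∈ cochainSupport f, a ⊆ K → b ⊆ K → a ∈ U → b ∈ U) → (∃ σ ∈ S, σ ∉ U) →
      GeneratedByMjMinus G k j (fun σ => if (σ : Finset V) ∈ U then f σ else 0) := by
    rintro U hU ⟨σ, hσ, hσU⟩
    by_contra hgen
    have hle := hmin _ ⟨restrict_cocycle hcov f hf.1 U hU, hgen⟩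
    refine absurd hle (not_le.2 (Set.ncard_lt_ncard ?_ (Set.toFinite _)))
    rw [Set.ssubset_iff_of_subset]
    · refine ⟨σ, hσ, ?_⟩
      rintro ⟨h, h'⟩
      simp [hσU] at h'
    · rintro τ ⟨h, h'⟩
      refine ⟨h, ?_⟩
      by_cases hτ : τ ∈ U
      · simpa [hτ] using h'
      · simp [hτ] at h'
  have g₁ := main T hTcl ⟨σ₂, h₂, hT₂⟩
  have g₂ := main Tᶜ hTcl' ⟨σ₁, h₁, fun h => h hT₁⟩
  apply hf.2
  have hsum := generated_add g₁ g₂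
  convert hsum using 1
  funext σ
  by_cases h : (σ : Finset V) ∈ T <;> simp [h]

end RSC
end

section
/- Let k ≥ 2 and j ∈ {1,…,k−1}. Let p = p(n) satisfy p = (1+o(1))·p_j, where p_j := ((j+1)·log n + log log n)·(k−j)!/((k−j+1)·n^{k−j}). Then for any constant d ≥ k−j+2, with high probability there is no j-cocycle in G_p whose support is traversable and has size s for any s with k−j+2 ≤ s ≤ d. -/
open MeasureTheory Filter

attribute [local instance] Classical.propDecidable

namespace RSC

variable {V : Type*}

/-- Neighbours of a family of `(k+1)`-sets. -/
noncomputable def nbrs (k j n : ℕ) (T : Finset (Finset (Fin n))) : Finset (Finset (Fin n)) :=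
  (Finset.powersetCard (k + 1) Finset.univ).filter
    (fun K => K ∉ T ∧ ∃ L ∈ T, ∃ σ, σ ⊆ L ∧ σ ⊆ K ∧ σ.card = j + 1)

/-- Connected families of `m+1` many `(k+1)`-sets. -/
noncomputable def conn (k j n : ℕ) : ℕ → Finset (Finset (Finset (Fin n)))
  | 0 => (Finset.powersetCard (k + 1) Finset.univ).image (fun K => {K})
  | (m + 1) => (conn k j n m).biUnion (fun T => (nbrs k j n T).image (fun K => insert K T))

/-- The `(j+1)`-sets covered by a family. -/
noncomputable def cov (j n : ℕ) (T : Finset (Finset (Fin n))) : Finset (Finset (Fin n)) :=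
  T.biUnion (fun K => Finset.powersetCard (j + 1) K)

/-- The `(k+1)`-sets which contain exactly one member of `S`. -/
noncomputable def bad (k n : ℕ) (S : Finset (Finset (Fin n))) : Finset (Finset (Fin n)) :=
  (Finset.powersetCard (k + 1) Finset.univ).filter
    (fun K => ∃ σ ∈ S, σ ⊆ K ∧ ∀ τ ∈ S, τ ⊆ K → τ = σ)

lemma conn_card {k j n m : ℕ} {T : Finset (Finset (Fin n))} (h : T ∈ conn k j n m) :
    T.card = m + 1 := by
  induction m generalizing T with
  | zero =>
    simp only [conn, Finset.mem_image] at h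
    obtain ⟨K, -, rfl⟩ := h
    simp
  | succ m ih =>
    simp only [conn, Finset.mem_biUnion, Finset.mem_image] at h
    obtain ⟨T', hT', K, hK, rfl⟩ := h
    simp only [nbrs, Finset.mem_filter] at hK
    rw [Finset.card_insert_of_notMem hK.2.1, ih hT']

lemma conn_sets {k j n m : ℕ} {T : Finset (Finset (Fin n))} (h : T ∈ conn k j n m) :
    ∀ K ∈ T, K.card = k + 1 := by
  induction m generalizing T with
  | zero =>
    simp only [conn, Finset.mem_image] at h
    obtain ⟨K, hK, rfl⟩ := h
    intro K' hK'
    rw [Finset.mem_singleton] at hK'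
    subst hK'
    exact (Finset.mem_powersetCard.1 hK).2
  | succ m ih =>
    simp only [conn, Finset.mem_biUnion, Finset.mem_image] at h
    obtain ⟨T', hT', K, hK, rfl⟩ := h
    simp only [nbrs, Finset.mem_filter] at hK
    intro K' hK'
    rcases Finset.mem_insert.1 hK' with rfl | h1
    · exact (Finset.mem_powersetCard.1 hK.1).2
    · exact ih hT' _ h1

lemma cov_card_le {k j n m : ℕ} {T : Finset (Finset (Fin n))} (h : T ∈ conn k j n m) :
    (cov j n T).card ≤ (m + 1) * 2 ^ (k + 1) := by
  rw [← conn_card h]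
  refine Finset.card_biUnion_le_card_mul _ _ _ fun K hK => ?_
  rw [Finset.card_powersetCard, conn_sets h K hK]
  exact Nat.choose_le_two_pow _ _

lemma nbrs_card_le {k j n m : ℕ} (hjk : j < k) {T : Finset (Finset (Fin n))}
    (h : T ∈ conn k j n m) :
    (nbrs k j n T).card ≤ (m + 1) * 2 ^ (k + 1) * n ^ (k - j) := by
  have hsub : nbrs k j n T ⊆ ((cov j n T) ×ˢ
      (Finset.powersetCard (k - j) (Finset.univ : Finset (Fin n)))).image
        (fun x => x.1 ∪ x.2) := by
    intro K hK
    simp only [nbrs, Finset.mem_filter, Finset.mem_powersetCard] at hK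
    obtain ⟨⟨-, hc⟩, -, L, hL, σ, hσL, hσK, hσ⟩ := hK
    refine Finset.mem_image.2 ⟨(σ, K \ σ), ?_, ?_⟩
    · rw [Finset.mem_product]
      refine ⟨Finset.mem_biUnion.2 ⟨L, hL, Finset.mem_powersetCard.2 ⟨hσL, hσ⟩⟩, ?_⟩
      refine Finset.mem_powersetCard.2 ⟨Finset.subset_univ _, ?_⟩
      have := Finset.card_sdiff_add_card_eq_card hσK
      simp only
      omega
    · exact Finset.union_sdiff_of_subset hσK
  refine (Finset.card_le_card hsub).trans (Finset.card_image_le.trans ?_)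
  rw [Finset.card_product]
  refine Nat.mul_le_mul (cov_card_le h) ?_
  rw [Finset.card_powersetCard, Finset.card_univ, Fintype.card_fin]
  exact Nat.choose_le_pow _ _

lemma conn_count {k j n d : ℕ} (hjk : j < k) (m : ℕ) (hm : m ≤ d) :
    (conn k j n m).card ≤ n ^ (k + 1) * ((d + 1) * 2 ^ (k + 1) * n ^ (k - j)) ^ m := by
  induction m with
  | zero =>
    refine Finset.card_image_le.trans ?_
    rw [Finset.card_powersetCard, Finset.card_univ, Fintype.card_fin]
    simpa using Nat.choose_le_pow _ _
  | succ m ih =>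
    have h1 : (conn k j n (m + 1)).card ≤
        (conn k j n m).card * ((d + 1) * 2 ^ (k + 1) * n ^ (k - j)) := by
      refine Finset.card_biUnion_le_card_mul _ _ _ fun T hT => ?_
      refine Finset.card_image_le.trans ((nbrs_card_le hjk hT).trans ?_)
      gcongr
      omega
    refine h1.trans ?_
    rw [pow_succ _ m, ← mul_assoc (n ^ (k + 1))]
    exact Nat.mul_le_mul_right _ (ih (by omega))

lemma bad_card_ge {k j n d s : ℕ} (hjk : j < k) {S : Finset (Finset (Fin n))}
    (hS : ∀ σ ∈ S, σ.card = j + 1) (hd : S.card ≤ d) (hs : s ≤ S.card) :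
    s * (n - d * (j + 1)).choose (k - j) ≤ (bad k n S).card := by
  set U : Finset (Fin n) := S.biUnion id with hU
  have hUc : U.card ≤ d * (j + 1) := by
    refine (Finset.card_biUnion_le_card_mul _ _ (j + 1) fun σ hσ => (hS σ hσ).le).trans ?_
    exact Nat.mul_le_mul_right _ hd
  have hsubU : ∀ σ ∈ S, σ ⊆ U := fun σ hσ => Finset.subset_biUnion_of_mem id hσ
  have hdisj : ∀ W ∈ Finset.powersetCard (k - j) Uᶜ, Disjoint W U := by
    intro W hW
    have := (Finset.mem_powersetCard.1 hW).1
    exact Finset.disjoint_left.2 fun x hx hxU => (Finset.mem_compl.1 (this hx)) hxU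
  have hinter : ∀ σ ∈ S, ∀ W ∈ Finset.powersetCard (k - j) Uᶜ, (σ ∪ W) ∩ U = σ := by
    intro σ hσ W hW
    rw [Finset.union_inter_distrib_right, Finset.inter_eq_left.2 (hsubU σ hσ),
      Finset.disjoint_iff_inter_eq_empty.1 (hdisj W hW), Finset.union_empty]
  have himg : (S ×ˢ Finset.powersetCard (k - j) Uᶜ).image (fun x => x.1 ∪ x.2) ⊆ bad k n S := by
    intro K hK
    obtain ⟨⟨σ, W⟩, hx, rfl⟩ := Finset.mem_image.1 hK
    obtain ⟨hσ, hW⟩ := Finset.mem_product.1 hx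
    simp only at hσ hW
    refine Finset.mem_filter.2 ⟨Finset.mem_powersetCard.2 ⟨Finset.subset_univ _, ?_⟩,
      σ, hσ, Finset.subset_union_left, ?_⟩
    · rw [Finset.card_union_of_disjoint, hS σ hσ, (Finset.mem_powersetCard.1 hW).2]
      · omega
      · exact ((hdisj W hW).mono_right (hsubU σ hσ)).symm
    · intro τ hτ hτK
      refine Finset.eq_of_subset_of_card_le ?_ (by rw [hS σ hσ, hS τ hτ])
      rw [← hinter σ hσ W hW]
      exact Finset.subset_inter hτK (hsubU τ hτ)
  refine le_trans ?_ (Finset.card_le_card himg)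
  rw [Finset.card_image_of_injOn, Finset.card_product, Finset.card_powersetCard,
    Finset.card_compl, Fintype.card_fin]
  · refine Nat.mul_le_mul hs (Nat.choose_le_choose _ ?_)
    omega
  · rintro ⟨σ, W⟩ hx ⟨σ', W'⟩ hx' heq
    obtain ⟨hσ, hW⟩ := Finset.mem_product.1 hx
    obtain ⟨hσ', hW'⟩ := Finset.mem_product.1 hx'
    simp only at hσ hW hσ' hW' heq
    have h1 : σ = σ' := by
      rw [← hinter σ hσ W hW, heq, hinter σ' hσ' W' hW']
    have h2 : W = W' := by
      have e1 : (σ ∪ W) \ U = W := by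
        rw [Finset.union_sdiff_distrib, Finset.sdiff_eq_empty_iff_subset.2 (hsubU σ hσ),
          Finset.empty_union, Finset.sdiff_eq_self_of_disjoint (hdisj W hW)]
      have e2 : (σ' ∪ W') \ U = W' := by
        rw [Finset.union_sdiff_distrib, Finset.sdiff_eq_empty_iff_subset.2 (hsubU σ' hσ'),
          Finset.empty_union, Finset.sdiff_eq_self_of_disjoint (hdisj W' hW')]
      rw [← e1, heq, e2]
    rw [h1, h2]

lemma isSimplex_top {k n : ℕ} (hk : 2 ≤ k) {t : Finset (Fin n) → ℝ} {p : ℝ}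
    {K : Finset (Fin n)} : IsSimplex (complexAt k n t p) k K ↔ K.card = k + 1 ∧ t K ≤ p := by
  constructor
  · rintro ⟨h, hc⟩
    refine ⟨hc, ?_⟩
    rcases h with ⟨v, rfl⟩ | ⟨-, K', hK', ht, hsub⟩
    · simp at hc; omega
    · have : K = K' := Finset.eq_of_subset_of_card_le hsub (by omega)
      rwa [this]
  · rintro ⟨hc, ht⟩
    exact ⟨Or.inr ⟨Finset.card_pos.1 (by omega), K, hc, ht, subset_rfl⟩, hc⟩

lemma cover_exists {k j n : ℕ} {P : Finset (Fin n) → Prop}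
    (hPc : ∀ K, P K → K.card = k + 1)
    (S : Finset (Finset (Fin n))) (hS : ∀ σ ∈ S, σ.card = j + 1) (hne : S.Nonempty)
    (htr : ∀ σ₁ ∈ S, ∀ σ₂ ∈ S, Relation.TransGen
      (fun a b => a ∈ S ∧ b ∈ S ∧ ∃ K, P K ∧ a ⊆ K ∧ b ⊆ K) σ₁ σ₂) (i : ℕ) :
    ∃ m ≤ i, ∃ T ∈ conn k j n m, (∀ K ∈ T, P K) ∧
      (S ⊆ cov j n T ∨ i + 1 ≤ (S ∩ cov j n T).card) ∧ (S ∩ cov j n T).Nonempty := by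
  induction i with
  | zero =>
    obtain ⟨σ, hσ⟩ := hne
    obtain ⟨K, hK, hσK⟩ : ∃ K, P K ∧ σ ⊆ K := by
      have := htr σ hσ σ hσ
      cases this with
      | single h => exact ⟨_, h.2.2.choose_spec.1, h.2.2.choose_spec.2.1⟩
      | tail _ h => exact ⟨_, h.2.2.choose_spec.1, h.2.2.choose_spec.2.2⟩
    have hmem : σ ∈ S ∩ cov j n {K} := by
      refine Finset.mem_inter.2 ⟨hσ, Finset.mem_biUnion.2 ⟨K, Finset.mem_singleton_self _,
        Finset.mem_powersetCard.2 ⟨hσK, hS σ hσ⟩⟩⟩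
    refine ⟨0, le_rfl, {K}, Finset.mem_image.2 ⟨K, Finset.mem_powersetCard.2
      ⟨Finset.subset_univ _, hPc K hK⟩, rfl⟩, ?_, Or.inr ?_, ⟨σ, hmem⟩⟩
    · intro K' hK'
      rw [Finset.mem_singleton.1 hK']; exact hK
    · exact Finset.card_pos.2 ⟨σ, hmem⟩
  | succ i ih =>
    obtain ⟨m, hm, T, hT, hTP, hcov, hne'⟩ := ih
    by_cases hall : S ⊆ cov j n T
    · exact ⟨m, by omega, T, hT, hTP, Or.inl hall, hne'⟩
    have hc := hcov.resolve_left hall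
    obtain ⟨σ₁, hσ₁⟩ := hne'
    obtain ⟨hσ₁S, hσ₁c⟩ := Finset.mem_inter.1 hσ₁
    obtain ⟨σ₂, hσ₂S, hσ₂c⟩ := Finset.not_subset.1 hall
    obtain ⟨a, b, haS, hbS, hac, hbc, K, hK, haK, hbK⟩ : ∃ a b, a ∈ S ∧ b ∈ S ∧
        a ∈ cov j n T ∧ b ∉ cov j n T ∧ ∃ K, P K ∧ a ⊆ K ∧ b ⊆ K := by
      by_contra hcon
      have key : ∀ x, Relation.TransGen
          (fun a b => a ∈ S ∧ b ∈ S ∧ ∃ K, P K ∧ a ⊆ K ∧ b ⊆ K) σ₁ x → x ∈ cov j n T := by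
        intro x hx
        induction hx with
        | single h =>
          by_contra hb
          exact hcon ⟨_, _, h.1, h.2.1, hσ₁c, hb, h.2.2⟩
        | tail _ h ih =>
          by_contra hb
          exact hcon ⟨_, _, h.1, h.2.1, ih, hb, h.2.2⟩
      exact hσ₂c (key _ (htr σ₁ hσ₁S σ₂ hσ₂S))
    have hbK' : b ∈ Finset.powersetCard (j + 1) K := Finset.mem_powersetCard.2 ⟨hbK, hS b hbS⟩
    have hKT : K ∉ T := fun h => hbc (Finset.mem_biUnion.2 ⟨K, h, hbK'⟩)
    obtain ⟨L, hL, haL⟩ := Finset.mem_biUnion.1 hac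
    have hmono : cov j n T ⊆ cov j n (insert K T) :=
      Finset.biUnion_subset_biUnion_of_subset_left _ (Finset.subset_insert _ _)
    refine ⟨m + 1, by omega, insert K T, ?_, ?_, Or.inr ?_, ?_⟩
    · refine Finset.mem_biUnion.2 ⟨T, hT, Finset.mem_image.2 ⟨K, ?_, rfl⟩⟩
      refine Finset.mem_filter.2 ⟨Finset.mem_powersetCard.2 ⟨Finset.subset_univ _, hPc K hK⟩,
        hKT, L, hL, a, (Finset.mem_powersetCard.1 haL).1, haK, hS a haS⟩
    · intro K' hK'
      rcases Finset.mem_insert.1 hK' with rfl | h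
      · exact hK
      · exact hTP _ h
    · refine Nat.succ_le_of_lt (lt_of_le_of_lt hc (Finset.card_lt_card ?_))
      refine Finset.ssubset_iff_subset_ne.2 ⟨Finset.inter_subset_inter_left hmono, fun h => ?_⟩
      have : b ∈ S ∩ cov j n (insert K T) := Finset.mem_inter.2 ⟨hbS,
        Finset.mem_biUnion.2 ⟨K, Finset.mem_insert_self _ _, hbK'⟩⟩
      rw [← h] at this
      exact hbc (Finset.mem_inter.1 this).2
    · exact ⟨σ₁, Finset.mem_inter.2 ⟨hσ₁S, hmono hσ₁c⟩⟩

lemma cocycle_bad {k j n : ℕ} (hjk : j < k) {t : Finset (Fin n) → ℝ} {p : ℝ}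
    (f : Cochain (complexAt k n t p) j) (hf : f ∈ cocycles (complexAt k n t p) j)
    (S : Finset (Finset (Fin n))) (hS : (S : Set (Finset (Fin n))) = cochainSupport f)
    (K : Finset (Fin n)) (hK : K ∈ bad k n S) : p < t K := by
  by_contra hle
  push Not at hle
  obtain ⟨hKc, σ, hσS, hσK, huniq⟩ := Finset.mem_filter.1 hK
  have hKc := (Finset.mem_powersetCard.1 hKc).2
  have hmem : ∀ A, A ∈ S ↔ A ∈ cochainSupport f := fun A => by rw [← hS]; simp
  obtain ⟨hσs, hσ1⟩ := (hmem σ).1 hσS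
  obtain ⟨v, hvK, hvσ⟩ : ∃ v ∈ K, v ∉ σ := by
    apply Finset.exists_mem_notMem_of_card_lt_card
    rw [hσs.2, hKc]; omega
  have hτK : insert v σ ⊆ K := Finset.insert_subset hvK hσK
  have hτ : IsSimplex (complexAt k n t p) (j + 1) (insert v σ) :=
    ⟨Or.inr ⟨⟨v, Finset.mem_insert_self _ _⟩, K, hKc, hle, hτK⟩, by
      rw [Finset.card_insert_of_notMem hvσ, hσs.2]⟩
  have h0 : coboundary (complexAt k n t p) j f ⟨insert v σ, hτ⟩ = 0 := by
    rw [LinearMap.mem_ker.1 hf]; rfl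
  have h1 : coboundary (complexAt k n t p) j f ⟨insert v σ, hτ⟩ = 1 := by
    change ∑ τ ∈ Finset.powersetCard (j + 1) (insert v σ),
      (if h : IsSimplex (complexAt k n t p) j τ then f ⟨τ, h⟩ else 0) = 1
    rw [Finset.sum_eq_single σ]
    · rw [dif_pos hσs, hσ1]
    · intro τ hτm hne
      by_cases h : IsSimplex (complexAt k n t p) j τ
      · rw [dif_pos h]
        by_contra hne0
        have h1 : f ⟨τ, h⟩ = 1 := by
          generalize f ⟨τ, h⟩ = x at hne0
          revert x; decide
        exact hne (huniq τ ((hmem τ).2 ⟨h, h1⟩)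
          ((Finset.mem_powersetCard.1 hτm).1.trans hτK))
      · rw [dif_neg h]
    · intro h
      exact absurd (Finset.mem_powersetCard.2 ⟨Finset.subset_insert _ _, hσs.2⟩) h
  rw [h0] at h1
  exact zero_ne_one h1

/-- The elementary bad event. -/
def ev (n : ℕ) (p : ℝ) (T B : Finset (Finset (Fin n))) : Set (Finset (Fin n) → ℝ) :=
  {t | (∀ K ∈ T, t K ≤ p) ∧ ∀ K ∈ B, p < t K}

lemma ev_le {n : ℕ} {p : ℝ} (hp0 : 0 ≤ p) (hp1 : p ≤ 1) (T B : Finset (Finset (Fin n))) :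
    birthMeasure n (ev n p T B) ≤ ENNReal.ofReal (p ^ T.card * Real.exp (-(p * B.card))) := by
  by_cases hd : Disjoint T B
  swap
  · have : ev n p T B = ∅ := by
      obtain ⟨K, h1, h2⟩ := Finset.not_disjoint_iff.1 hd
      ext t
      simp only [ev, Set.mem_ofPred_eq, Set.mem_empty_iff_false, iff_false]
      intro h
      exact absurd (h.1 K h1) (not_le.2 (h.2 K h2))
    rw [this]; simp
  set A : Finset (Fin n) → Set ℝ := fun K =>
    if K ∈ T then Set.Iic p else if K ∈ B then Set.Ioi p else Set.univ with hA
  have hsub : ev n p T B ⊆ Set.univ.pi A := by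
    intro t ht K _
    simp only [hA]
    split_ifs with h1 h2
    · exact ht.1 K h1
    · exact ht.2 K h2
    · trivial
  refine (measure_mono hsub).trans ?_
  rw [birthMeasure, Measure.pi_pi]
  have hval : ∀ K, (volume.restrict (Set.Icc (0 : ℝ) 1)) (A K) ≤
      (if K ∈ T then ENNReal.ofReal p else 1) *
        (if K ∈ B then ENNReal.ofReal (1 - p) else 1) := by
    intro K
    simp only [hA]
    by_cases h1 : K ∈ T
    · have h2 : K ∉ B := Finset.disjoint_left.1 hd h1
      simp only [h1, h2, if_true, if_false, mul_one]
      rw [Measure.restrict_apply measurableSet_Iic]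
      refine (measure_mono (t := Set.Icc 0 p) ?_).trans ?_
      · rintro x ⟨hx, hx'⟩; exact ⟨hx'.1, hx⟩
      · simp
    · by_cases h2 : K ∈ B
      · simp only [h1, h2, if_true, if_false, one_mul]
        rw [Measure.restrict_apply measurableSet_Ioi]
        refine (measure_mono (t := Set.Icc p 1) ?_).trans ?_
        · rintro x ⟨hx, hx'⟩; exact ⟨le_of_lt hx, hx'.2⟩
        · simp
      · simp [h1, h2]
  refine (Finset.prod_le_prod' fun K _ => hval K).trans ?_
  rw [Finset.prod_mul_distrib, Finset.prod_ite_mem, Finset.prod_ite_mem, Finset.univ_inter,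
    Finset.univ_inter, Finset.prod_const, Finset.prod_const, ← ENNReal.ofReal_pow hp0,
    ← ENNReal.ofReal_pow (by linarith), ← ENNReal.ofReal_mul (by positivity)]
  refine ENNReal.ofReal_le_ofReal (mul_le_mul_of_nonneg_left ?_ (by positivity))
  have := pow_le_pow_left₀ (by linarith : (0:ℝ) ≤ 1 - p) (Real.one_sub_le_exp_neg p) B.card
  refine this.trans (le_of_eq ?_)
  rw [← Real.exp_nat_mul]
  ring_nf

instance (n : ℕ) : IsProbabilityMeasure (birthMeasure n) := by
  have : IsProbabilityMeasure (volume.restrict (Set.Icc (0 : ℝ) 1)) := ⟨by simp⟩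
  unfold birthMeasure
  infer_instance

lemma union_bound {k j n d : ℕ} (hk : 2 ≤ k) (hjk : j < k) {p : ℝ} (hp0 : 0 ≤ p) (hp1 : p ≤ 1) :
    birthMeasure n {t : Finset (Fin n) → ℝ |
      ∀ f : Cochain (complexAt k n t p) j,
        f ∈ cocycles (complexAt k n t p) j →
          ¬ (Traversable (complexAt k n t p) k (cochainSupport f) ∧
            k - j + 2 ≤ (cochainSupport f).ncard ∧ (cochainSupport f).ncard ≤ d)}ᶜ ≤
    ∑ m ∈ Finset.range (d + 1), ENNReal.ofReal
      ((n : ℝ) ^ (k + 1) * (((d + 1 : ℕ) : ℝ) * 2 ^ (k + 1) * (n : ℝ) ^ (k - j)) ^ m *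
        (2 ^ ((d + 1) * 2 ^ (k + 1)) * (p ^ (m + 1) *
          Real.exp (-(p * (((k - j + 2 : ℕ) : ℝ) *
            ((n - d * (j + 1)).choose (k - j) : ℕ))))))) := by
  set E : ℝ := Real.exp (-(p * (((k - j + 2 : ℕ) : ℝ) *
            ((n - d * (j + 1)).choose (k - j) : ℕ)))) with hE
  set Sf : Finset (Finset (Fin n)) → Finset (Finset (Finset (Fin n))) := fun T =>
    (cov j n T).powerset.filter (fun S => k - j + 2 ≤ S.card ∧ S.card ≤ d) with hSf
  have hsub : {t : Finset (Fin n) → ℝ |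
      ∀ f : Cochain (complexAt k n t p) j,
        f ∈ cocycles (complexAt k n t p) j →
          ¬ (Traversable (complexAt k n t p) k (cochainSupport f) ∧
            k - j + 2 ≤ (cochainSupport f).ncard ∧ (cochainSupport f).ncard ≤ d)}ᶜ ⊆
      ⋃ m ∈ Finset.range (d + 1), ⋃ T ∈ conn k j n m, ⋃ S ∈ Sf T, ev n p T (bad k n S) := by
    intro t ht
    simp only [Set.mem_compl_iff, Set.mem_ofPred_eq, not_forall, not_not] at ht
    obtain ⟨f, hf, htr, h1, h2⟩ := ht
    set S : Finset (Finset (Fin n)) := (Set.toFinite (cochainSupport f)).toFinset with hSdef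
    have hS : (S : Set (Finset (Fin n))) = cochainSupport f := by simp [hSdef]
    have hmem : ∀ A, A ∈ cochainSupport f ↔ A ∈ S := fun A => by rw [← hS]; simp
    rw [← hS, Set.ncard_coe_finset] at h1 h2
    have hSc : ∀ σ ∈ S, σ.card = j + 1 := by
      intro σ hσ
      obtain ⟨h, -⟩ := (hmem σ).2 hσ
      exact h.2
    obtain ⟨m, hm, T, hT, hTP, hcov, -⟩ := cover_exists (k := k)
      (P := fun K => IsSimplex (complexAt k n t p) k K)
      (fun K hK => hK.2) S hSc (Finset.card_pos.1 (by omega))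
      (by
        intro σ₁ h₁ σ₂ h₂
        have := htr σ₁ ((hmem _).2 h₁) σ₂ ((hmem _).2 h₂)
        simpa only [hmem] using this) d
    have hScov : S ⊆ cov j n T := by
      refine hcov.resolve_right fun h => ?_
      have := Finset.card_le_card (Finset.inter_subset_left (s₁ := S) (s₂ := cov j n T))
      omega
    simp only [Set.mem_iUnion]
    refine ⟨m, Finset.mem_range.2 (by omega), T, hT, S, ?_, ?_, ?_⟩
    · exact Finset.mem_filter.2 ⟨Finset.mem_powerset.2 hScov, h1, h2⟩
    · exact fun K hK => ((isSimplex_top hk).1 (hTP K hK)).2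
    · exact fun K hK => cocycle_bad hjk f hf S hS K hK
  refine (measure_mono hsub).trans ((measure_biUnion_finset_le _ _).trans ?_)
  refine Finset.sum_le_sum fun m hm => ?_
  have hm : m ≤ d := by have := Finset.mem_range.1 hm; omega
  have hT : ∀ T ∈ conn k j n m, birthMeasure n (⋃ S ∈ Sf T, ev n p T (bad k n S)) ≤
      ENNReal.ofReal (2 ^ ((d + 1) * 2 ^ (k + 1)) * (p ^ (m + 1) * E)) := by
    intro T hT
    refine (measure_biUnion_finset_le _ _).trans ?_
    have hS : ∀ S ∈ Sf T, birthMeasure n (ev n p T (bad k n S)) ≤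
        ENNReal.ofReal (p ^ (m + 1) * E) := by
      intro S hS
      obtain ⟨hSc, hs1, hs2⟩ := Finset.mem_filter.1 hS
      refine (ev_le hp0 hp1 _ _).trans (ENNReal.ofReal_le_ofReal ?_)
      rw [conn_card hT]
      refine mul_le_mul_of_nonneg_left ?_ (by positivity)
      refine Real.exp_le_exp.2 (neg_le_neg (mul_le_mul_of_nonneg_left ?_ hp0))
      have hSj : ∀ σ ∈ S, σ.card = j + 1 := by
        intro σ hσ
        obtain ⟨K, -, hK⟩ := Finset.mem_biUnion.1 (Finset.mem_powerset.1 hSc hσ)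
        exact (Finset.mem_powersetCard.1 hK).2
      exact_mod_cast bad_card_ge hjk hSj hs2 hs1
    refine (Finset.sum_le_card_nsmul _ _ _ hS).trans ?_
    rw [nsmul_eq_mul, ENNReal.ofReal_mul (p := 2 ^ ((d + 1) * 2 ^ (k + 1))) (by positivity)]
    refine mul_le_mul' ?_ le_rfl
    have hc : (Sf T).card ≤ 2 ^ ((d + 1) * 2 ^ (k + 1)) := by
      refine (Finset.card_filter_le _ _).trans ?_
      rw [Finset.card_powerset]
      refine Nat.pow_le_pow_right (by norm_num) ((cov_card_le hT).trans ?_)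
      gcongr
    rw [← ENNReal.ofReal_natCast]
    exact ENNReal.ofReal_le_ofReal (by exact_mod_cast hc)
  refine (measure_biUnion_finset_le _ _).trans ((Finset.sum_le_card_nsmul _ _ _ hT).trans ?_)
  rw [nsmul_eq_mul, ENNReal.ofReal_mul (p := (n : ℝ) ^ (k + 1) *
    (((d + 1 : ℕ) : ℝ) * 2 ^ (k + 1) * (n : ℝ) ^ (k - j)) ^ m) (by positivity)]
  refine mul_le_mul' ?_ le_rfl
  rw [← ENNReal.ofReal_natCast]
  exact ENNReal.ofReal_le_ofReal (by exact_mod_cast conn_count hjk m hm)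

lemma tendsto_log_nat : Tendsto (fun n : ℕ => Real.log (n : ℝ)) atTop atTop :=
  Real.tendsto_log_atTop.comp tendsto_natCast_atTop_atTop

lemma x_limit (k j : ℕ) (p : ℕ → ℝ)
    (hp : Tendsto (fun n : ℕ => p n / pjThreshold k j n) atTop (nhds 1)) :
    Tendsto (fun n : ℕ => p n * (n : ℝ) ^ (k - j) / Real.log n) atTop
      (nhds ((j + 1 : ℝ) * (Nat.factorial (k - j)) / ((k - j + 1 : ℕ) : ℝ))) := by
  have hll : Tendsto (fun n : ℕ => Real.log (Real.log n) / Real.log n) atTop (nhds 0) :=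
    (Real.isLittleO_log_id_atTop.tendsto_div_nhds_zero).comp tendsto_log_nat
  have h1 : Tendsto (fun n : ℕ => (p n / pjThreshold k j n) *
      (((j + 1 : ℝ) + Real.log (Real.log n) / Real.log n) *
        ((Nat.factorial (k - j)) / ((k - j + 1 : ℕ) : ℝ)))) atTop
      (nhds (1 * (((j + 1 : ℝ) + 0) * ((Nat.factorial (k - j)) / ((k - j + 1 : ℕ) : ℝ))))) :=
    hp.mul ((tendsto_const_nhds.add hll).mul_const _)
  have e : (1 * (((j + 1 : ℝ) + 0) * ((Nat.factorial (k - j)) / ((k - j + 1 : ℕ) : ℝ)))) =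
      ((j + 1 : ℝ) * (Nat.factorial (k - j)) / ((k - j + 1 : ℕ) : ℝ)) := by ring
  rw [e] at h1
  refine h1.congr' ?_
  filter_upwards [tendsto_log_nat.eventually_ge_atTop 1, eventually_gt_atTop 0] with n hn hn0
  have hn0' : (0 : ℝ) < n := by exact_mod_cast hn0
  have hL : 0 < Real.log n := by linarith
  have hLL : 0 ≤ Real.log (Real.log n) := Real.log_nonneg hn
  have hnum : 0 < (j + 1 : ℝ) * Real.log n + Real.log (Real.log n) := by positivity
  have hf : (0 : ℝ) < (Nat.factorial (k - j)) := by exact_mod_cast Nat.factorial_pos _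
  have hr : (0 : ℝ) < ((k - j + 1 : ℕ) : ℝ) := by positivity
  have hnp : (0 : ℝ) < (n : ℝ) ^ (k - j) := by positivity
  unfold pjThreshold
  generalize (n : ℝ) ^ (k - j) = N at *
  generalize ((k - j + 1 : ℕ) : ℝ) = r at *
  generalize ((Nat.factorial (k - j) : ℕ) : ℝ) = F at *
  generalize Real.log (Real.log n) = b at *
  generalize Real.log n = a at *
  field_simp

lemma ratio_limit (D r : ℕ) :
    Tendsto (fun n : ℕ => (((n - D + 1 - r : ℕ) : ℝ) / n) ^ r) atTop (nhds 1) := by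
  have h : Tendsto (fun n : ℕ => 1 + ((1 : ℝ) - D - r) / (n : ℝ)) atTop (nhds (1 + 0)) :=
    tendsto_const_nhds.add (tendsto_const_div_atTop_nhds_zero_nat _)
  rw [add_zero] at h
  have h2 := h.pow r
  rw [one_pow] at h2
  refine h2.congr' ?_
  filter_upwards [eventually_ge_atTop (D + r + 1)] with n hn
  have hn0 : (n : ℝ) ≠ 0 := by have : n ≠ 0 := by omega
                               exact_mod_cast this
  rw [Nat.cast_sub (by omega), Nat.cast_add, Nat.cast_sub (by omega)]
  congr 1
  field_simp
  push_cast
  ring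

lemma choose_lower (D r n : ℕ) (hn : 0 < n) :
    (((n - D + 1 - r : ℕ) : ℝ) / n) ^ r * (n : ℝ) ^ r / (Nat.factorial r) ≤
      ((n - D).choose r : ℕ) := by
  have hn' : (n : ℝ) ≠ 0 := by positivity
  rw [div_pow, div_mul_cancel₀ _ (by positivity), div_le_iff₀ (by positivity)]
  have := Nat.pow_sub_le_descFactorial (n - D) r
  rw [Nat.descFactorial_eq_factorial_mul_choose, mul_comm] at this
  exact_mod_cast this

lemma term_limit (k j d m : ℕ) (p : ℕ → ℝ)
    (hp : Tendsto (fun n : ℕ => p n / pjThreshold k j n) atTop (nhds 1))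
    (hpos : ∀ᶠ n in atTop, 0 ≤ p n) :
    Tendsto (fun n : ℕ => (p n * (n : ℝ) ^ (k - j)) ^ (m + 1) * ((n : ℝ) ^ (j + 1) *
      Real.exp (-(p n * (((k - j + 2 : ℕ) : ℝ) *
            ((n - d * (j + 1)).choose (k - j) : ℕ)))))) atTop (nhds 0) := by
  have hx := x_limit k j p hp
  set r := k - j with hr
  set c : ℝ := (j + 1 : ℝ) * (Nat.factorial r) / ((r + 1 : ℕ) : ℝ) with hc
  set δ : ℝ := (j + 1 : ℝ) / (2 * ((r + 1 : ℕ) : ℝ)) with hδ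
  have hδ0 : 0 < δ := by positivity
  have hF : (0 : ℝ) < (Nat.factorial r) := by exact_mod_cast Nat.factorial_pos _
  -- exponent
  have hy : Tendsto (fun n : ℕ => ((r + 2 : ℕ) : ℝ) * ((p n * (n : ℝ) ^ r / Real.log n) *
      ((((n - d * (j + 1) + 1 - r : ℕ) : ℝ) / n) ^ r) / (Nat.factorial r))) atTop
      (nhds (((r + 2 : ℕ) : ℝ) * (c * 1 / (Nat.factorial r)))) :=
    ((hx.mul (ratio_limit (d * (j + 1)) r)).div_const _).const_mul _
  have hlt : (j + 1 : ℝ) + δ < ((r + 2 : ℕ) : ℝ) * (c * 1 / (Nat.factorial r)) := by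
    have e : ((r + 2 : ℕ) : ℝ) * (c * 1 / (Nat.factorial r)) = (j + 1 : ℝ) + 2 * δ := by
      rw [hc, hδ]; push_cast; field_simp; ring
    rw [e]; linarith
  have hev := hy.eventually (lt_mem_nhds hlt)
  have hg : Tendsto (fun n : ℕ => (p n * (n : ℝ) ^ r / Real.log n) ^ (m + 1) *
      (Real.log n ^ (m + 1) * Real.exp (-(δ * Real.log n)))) atTop
      (nhds (c ^ (m + 1) * 0)) := by
    refine (hx.pow (m + 1)).mul ?_
    have h := Real.tendsto_pow_mul_exp_neg_atTop_nhds_zero (m + 1)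
    have h2 := (h.comp (tendsto_log_nat.const_mul_atTop hδ0)).const_mul ((δ⁻¹) ^ (m + 1))
    rw [mul_zero] at h2
    refine h2.congr fun n => ?_
    simp only [Function.comp]
    rw [← mul_assoc, ← mul_pow, inv_mul_cancel_left₀ hδ0.ne']
  rw [mul_zero] at hg
  refine tendsto_of_tendsto_of_tendsto_of_le_of_le' tendsto_const_nhds hg ?_ ?_
  · filter_upwards [hpos] with n hn
    positivity
  · filter_upwards [hev, hpos, tendsto_log_nat.eventually_gt_atTop 0,
      eventually_gt_atTop 0] with n h1 hpn hL hn
    have hn' : (0 : ℝ) < n := by exact_mod_cast hn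
    rw [← mul_assoc (_ ^ (m + 1)) (Real.log n ^ (m + 1)), ← mul_pow, div_mul_cancel₀ _ hL.ne']
    refine mul_le_mul_of_nonneg_left ?_ (by positivity)
    have hpow : (n : ℝ) ^ (j + 1) = Real.exp ((j + 1 : ℝ) * Real.log n) := by
      rw [← Real.exp_log hn', ← Real.exp_nat_mul, Real.log_exp]
      push_cast; rfl
    rw [hpow, ← Real.exp_add]
    refine Real.exp_le_exp.2 ?_
    have hch := choose_lower (d * (j + 1)) r n hn
    have h2 := mul_le_mul_of_nonneg_left hch
      (mul_nonneg hpn (Nat.cast_nonneg (α := ℝ) (r + 2)))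
    have h3 := mul_lt_mul_of_pos_right h1 hL
    have h4 : ((r + 2 : ℕ) : ℝ) * ((p n * (n : ℝ) ^ r / Real.log n) *
      ((((n - d * (j + 1) + 1 - r : ℕ) : ℝ) / n) ^ r) / (Nat.factorial r)) * Real.log n =
      p n * ((r + 2 : ℕ) : ℝ) * ((((n - d * (j + 1) + 1 - r : ℕ) : ℝ) / n) ^ r * (n : ℝ) ^ r /
        (Nat.factorial r)) := by
      field_simp
    rw [h4] at h3
    nlinarith [h2, h3]

lemma p_bounds (k j : ℕ) (hjk : j < k) (p : ℕ → ℝ)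
    (hp : Tendsto (fun n : ℕ => p n / pjThreshold k j n) atTop (nhds 1)) :
    ∀ᶠ n in atTop, 0 ≤ p n ∧ p n ≤ 1 := by
  have hx := x_limit k j p hp
  have hL : Tendsto (fun n : ℕ => Real.log n / (n : ℝ) ^ (k - j)) atTop (nhds 0) := by
    have h := (isLittleO_log_rpow_atTop (r := ((k - j : ℕ) : ℝ))
      (by exact_mod_cast (by omega : 0 < k - j))).tendsto_div_nhds_zero.comp
        tendsto_natCast_atTop_atTop
    refine h.congr fun n => ?_
    simp only [Function.comp, Real.rpow_natCast]
  have h := hx.mul hL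
  rw [mul_zero] at h
  have hc : (0 : ℝ) < (j + 1 : ℝ) * (Nat.factorial (k - j)) / ((k - j + 1 : ℕ) : ℝ) := by
    have hF : (0 : ℝ) < (Nat.factorial (k - j)) := by exact_mod_cast Nat.factorial_pos _
    positivity
  filter_upwards [hx.eventually (lt_mem_nhds hc), h.eventually (gt_mem_nhds zero_lt_one),
    tendsto_log_nat.eventually_gt_atTop 0, eventually_gt_atTop 0] with n h1 h2 hL hn
  have hn' : (0 : ℝ) < (n : ℝ) ^ (k - j) := by positivity
  constructor
  · by_contra hneg
    push Not at hneg
    have : p n * (n : ℝ) ^ (k - j) / Real.log n < 0 :=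
      div_neg_of_neg_of_pos (mul_neg_of_neg_of_pos hneg hn') hL
    linarith
  · have : p n * (n : ℝ) ^ (k - j) / Real.log n * (Real.log n / (n : ℝ) ^ (k - j)) = p n := by
      field_simp
    rw [this] at h2
    exact h2.le

/-- Lemma 5.4: for `p = (1+o(1))·p_j` and any constant `d ≥ k-j+2`, whp there is no
`j`-cocycle in `G_p` with traversable support of size `s` for any `k-j+2 ≤ s ≤ d`. -/
theorem statement17 (k j : ℕ) (hk : 2 ≤ k) (hj : 1 ≤ j) (hjk : j < k)
    (p : ℕ → ℝ) (hp : Tendsto (fun n : ℕ => p n / pjThreshold k j n) atTop (nhds 1))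
    (d : ℕ) (hd : k - j + 2 ≤ d) :
    Tendsto (fun n : ℕ => birthMeasure n {t : Finset (Fin n) → ℝ |
      ∀ f : Cochain (complexAt k n t (p n)) j,
        f ∈ cocycles (complexAt k n t (p n)) j →
          ¬ (Traversable (complexAt k n t (p n)) k (cochainSupport f) ∧
            k - j + 2 ≤ (cochainSupport f).ncard ∧ (cochainSupport f).ncard ≤ d)})
      atTop (nhds 1) := by
  set good : (n : ℕ) → Set (Finset (Fin n) → ℝ) := fun n => {t : Finset (Fin n) → ℝ |
      ∀ f : Cochain (complexAt k n t (p n)) j,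
        f ∈ cocycles (complexAt k n t (p n)) j →
          ¬ (Traversable (complexAt k n t (p n)) k (cochainSupport f) ∧
            k - j + 2 ≤ (cochainSupport f).ncard ∧ (cochainSupport f).ncard ≤ d)} with hgood
  have hb := p_bounds k j hjk p hp
  have hpos : ∀ᶠ n in atTop, 0 ≤ p n := hb.mono fun n h => h.1
  have hbad : Tendsto (fun n => birthMeasure n (good n)ᶜ) atTop (nhds 0) := by
    have hub : Tendsto (fun n : ℕ => ∑ m ∈ Finset.range (d + 1), ENNReal.ofReal
      ((n : ℝ) ^ (k + 1) * (((d + 1 : ℕ) : ℝ) * 2 ^ (k + 1) * (n : ℝ) ^ (k - j)) ^ m *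
        (2 ^ ((d + 1) * 2 ^ (k + 1)) * ((p n) ^ (m + 1) *
          Real.exp (-(p n * (((k - j + 2 : ℕ) : ℝ) *
            ((n - d * (j + 1)).choose (k - j) : ℕ)))))))) atTop
        (nhds (∑ m ∈ Finset.range (d + 1), 0)) := by
      refine tendsto_finsetSum _ fun m _ => ?_
      have h := (term_limit k j d m p hp hpos).const_mul
        ((((d + 1 : ℕ) : ℝ) * 2 ^ (k + 1)) ^ m * 2 ^ ((d + 1) * 2 ^ (k + 1)))
      rw [mul_zero] at h
      have h' := ENNReal.tendsto_ofReal h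
      rw [ENNReal.ofReal_zero] at h'
      refine h'.congr fun n => ?_
      congr 1
      have e : (n : ℝ) ^ (k + 1) = (n : ℝ) ^ (j + 1) * (n : ℝ) ^ (k - j) := by
        rw [← pow_add]; congr 1; omega
      rw [e, mul_pow _ ((n : ℝ) ^ (k - j)) m, mul_pow (p n), pow_succ ((n : ℝ) ^ (k - j)) m]
      generalize Real.exp _ = E
      generalize (2 : ℝ) ^ ((d + 1) * 2 ^ (k + 1)) = A
      generalize (((d + 1 : ℕ) : ℝ) * 2 ^ (k + 1)) ^ m = B
      generalize ((n : ℝ) ^ (k - j)) ^ m = C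
      generalize (n : ℝ) ^ (k - j) = D
      generalize (n : ℝ) ^ (j + 1) = F
      ring
    rw [Finset.sum_const_zero] at hub
    refine tendsto_of_tendsto_of_tendsto_of_le_of_le' tendsto_const_nhds hub
      (Eventually.of_forall fun n => zero_le) ?_
    filter_upwards [hb] with n hn
    exact union_bound hk hjk hn.1 hn.2
  have hlow : Tendsto (fun n => 1 - birthMeasure n (good n)ᶜ) atTop (nhds 1) := by
    have := ENNReal.Tendsto.sub (tendsto_const_nhds (x := (1 : ENNReal)) (f := atTop)) hbad
      (Or.inl ENNReal.one_ne_top)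
    simpa using this
  refine tendsto_of_tendsto_of_tendsto_of_le_of_le hlow tendsto_const_nhds ?_
    (fun n => prob_le_one)
  intro n
  refine tsub_le_iff_right.2 ?_
  have h := measure_union_le (μ := birthMeasure n) (good n) (good n)ᶜ
  rw [Set.union_compl_self, measure_univ] at h
  exact h

end RSC
end
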